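/- arXiv:2209.14880 — 2 statements merged into one kernel-verified Lean document; each statement's English description precedes it below -/
import Mathlib

section
/- There exists ε₀ ∈ (0, π/6) such that for every ε ∈ (0, ε₀), every r₀ ∈ (1, √2), every pair of potentials v₂, v₃ satisfying assumptions (i₂)–(iii₂) and (i₃)–(iv₃), every integer n ≥ 1, and every configuration C_n of n distinct points in ℝ², the energy satisfies F(C_n) ≥ −2n + ⌈2√n⌉. -/
open scoped Real

noncomputable section

abbrev Pt : Type := EuclideanSpace ℝ (Fin 2)

/-- The clockwise angle in `[0, 2π)` between the vectors `u` and `v`. -/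
noncomputable def cwAngle (u v : Pt) : ℝ :=
  let a := Complex.arg ((⟨u 0, u 1⟩ : ℂ) * (starRingEnd ℂ) (⟨v 0, v 1⟩ : ℂ))
  if a < 0 then a + 2 * π else a

/-- Assumptions (i₂)–(iii₂) on the two-body potential. -/
structure V2Hyp (ε r0 : ℝ) (v2 : ℝ → EReal) : Prop where
  eq_neg_one : v2 1 = -1
  ge_neg_one : ∀ r : ℝ, 0 ≤ r → -1 ≤ v2 r
  gt_neg_one : ∀ r : ℝ, 0 ≤ r → r ≠ 1 → -1 < v2 r
  eq_zero : ∀ r : ℝ, r0 ≤ r → v2 r = 0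
  repulsive : ∀ r : ℝ, 0 ≤ r → r ≤ 1 - ε → ((ε⁻¹ : ℝ) : EReal) < v2 r

/-- Assumptions (i₃)–(iv₃) on the three-body potential. -/
structure V3Hyp (ε : ℝ) (v3 : ℝ → ℝ) : Prop where
  symm : ∀ θ : ℝ, 0 ≤ θ → θ ≤ 2 * π → v3 θ = v3 (2 * π - θ)
  zero_pi_half : v3 (π / 2) = 0
  zero_pi : v3 π = 0
  zero_three_pi_half : v3 (3 * π / 2) = 0
  pos : ∀ θ : ℝ, 0 ≤ θ → θ ≤ 2 * π → θ ∉ ({π / 2, π, 3 * π / 2} : Set ℝ) → 0 < v3 θ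
  slope : ∀ θ ∈ Set.Icc (π - ε) (π + ε), 4 * (π / 6 - ε)⁻¹ * |θ - π| ≤ v3 θ
  slope_eq : ∀ θ ∈ Set.Icc (π - ε) (π + ε), v3 θ = 4 * (π / 6 - ε)⁻¹ * |θ - π| → θ = π
  large : ∀ θ : ℝ, 0 ≤ θ → θ ≤ 2 * π →
    θ ∉ Set.Icc (π / 2 - ε) (π / 2 + ε) ∪ Set.Icc (π - ε) (π + ε) ∪
        Set.Icc (3 * π / 2 - ε) (3 * π / 2 + ε) →
    4 / (1 - ε) ^ 2 * (Real.sqrt 2 + 1 / 2) ^ 2 < v3 θ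

/-- The configurational energy `F(C_n)`. -/
noncomputable def energy (r0 : ℝ) (v2 : ℝ → EReal) (v3 : ℝ → ℝ) {n : ℕ}
    (x : Fin n → Pt) : EReal :=
  ((1 / 2 : ℝ) : EReal) *
      ∑ i : Fin n, ∑ j : Fin n, (if j ≠ i then v2 (dist (x i) (x j)) else 0)
    + (((1 / 2 : ℝ) * ∑ i : Fin n, ∑ j : Fin n, ∑ k : Fin n,
        (if i ≠ j ∧ i ≠ k ∧ j ≠ k ∧ dist (x i) (x j) ≤ r0 ∧ dist (x i) (x k) ≤ r0
          then v3 (cwAngle (x j - x i) (x k - x i)) else 0) : ℝ) : EReal)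

/-- `x` is an `n`-point configuration of minimal energy. -/
def IsMinimizer (r0 : ℝ) (v2 : ℝ → EReal) (v3 : ℝ → ℝ) {n : ℕ} (x : Fin n → Pt) : Prop :=
  Function.Injective x ∧
    ∀ y : Fin n → Pt, Function.Injective y → energy r0 v2 v3 x ≤ energy r0 v2 v3 y

/-- Directions from each point to the others, recorded as one of sixteen sectors of the circle,
together with a graph whose incident edges are pairwise roughly orthogonal or opposite. -/
structure SectorGraph {V : Type*} (G : SimpleGraph V) (δ : V → V → ZMod 16) : Prop where
  reverse : ∀ i j, i ≠ j → δ j i = δ i j + 8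
  add : ∀ i j k, i ≠ j → j ≠ k → δ i j = δ j k → i ≠ k ∧ δ i k = δ i j
  compat : ∀ i j k, G.Adj i j → G.Adj i k → j ≠ k →
    δ i k - δ i j ∈ ({3, 4, 5, 8, 11, 12, 13} : Finset (ZMod 16))

namespace SectorGraph

variable {V : Type*} {G : SimpleGraph V} {δ : V → V → ZMod 16}

open Relation

open Classical in
/-- The undirected sector of some edge at `i`. -/
def refAxis (G : SimpleGraph V) (δ : V → V → ZMod 16) (i : V) : ZMod 16 :=
  if h : ∃ j, G.Adj i j then 2 * δ i h.choose else 0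

/-- The edges at a vertex lie on at most two axes; `slot` tells which one. -/
def slot (G : SimpleGraph V) (δ : V → V → ZMod 16) (i j : V) : Bool :=
  decide (2 * δ i j = refAxis G δ i)

/-- One step upwards along a nearly straight chain of edges. -/
def Step (G : SimpleGraph V) (δ : V → V → ZMod 16) (p q : V × Bool) : Prop :=
  G.Adj p.1 q.1 ∧ (δ p.1 q.1).val < 8 ∧ slot G δ p.1 q.1 = p.2 ∧ slot G δ q.1 p.1 = q.2

/-- The slot `p` contains an edge with axis `a`. -/
def OnAxis (G : SimpleGraph V) (δ : V → V → ZMod 16) (p : V × Bool) (a : ZMod 16) : Prop :=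
  ∃ j, G.Adj p.1 j ∧ slot G δ p.1 j = p.2 ∧ 2 * δ p.1 j = a

lemma two_mul_mem {e : ZMod 16} (he : e ∈ ({3, 4, 5, 8, 11, 12, 13} : Finset (ZMod 16))) :
    2 * e = 0 ∨ 2 * e ∈ ({6, 8, 10} : Finset (ZMod 16)) := by
  revert e; decide

lemma add_notMem {e f : ZMod 16} (he : e ∈ ({6, 8, 10} : Finset (ZMod 16)))
    (hf : f ∈ ({6, 8, 10} : Finset (ZMod 16))) :
    e + f ∉ ({6, 8, 10} : Finset (ZMod 16)) := by
  revert e f; decide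

lemma eq_of_two_mul_eq {e f : ZMod 16} (h : 2 * e = 2 * f) (hef : e.val < 8 ↔ f.val < 8) :
    e = f := by
  revert e f; decide

lemma val_add_eight (e : ZMod 16) : (e + 8).val < 8 ↔ ¬ e.val < 8 := by
  revert e; decide

lemma two_mul_add_eight (e : ZMod 16) : 2 * (e + 8) = 2 * e := by
  revert e; decide

lemma axis_symm (h : SectorGraph G δ) {i j : V} (hij : i ≠ j) : 2 * δ j i = 2 * δ i j := by
  rw [h.reverse i j hij, two_mul_add_eight]

lemma axis_sub (h : SectorGraph G δ) {i j k : V} (hj : G.Adj i j) (hk : G.Adj i k) :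
    2 * δ i k = 2 * δ i j ∨ 2 * δ i k - 2 * δ i j ∈ ({6, 8, 10} : Finset (ZMod 16)) := by
  by_cases hjk : j = k
  · exact Or.inl (by rw [hjk])
  · rw [← sub_eq_zero, ← mul_sub]
    exact two_mul_mem (h.compat i j k hj hk hjk)

lemma axis_eq_of_slot_eq (h : SectorGraph G δ) {i j k : V} (hj : G.Adj i j) (hk : G.Adj i k)
    (hs : slot G δ i j = slot G δ i k) : 2 * δ i j = 2 * δ i k := by
  have hex : ∃ j, G.Adj i j := ⟨j, hj⟩
  have href : refAxis G δ i = 2 * δ i hex.choose := dif_pos hex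
  have hr := hex.choose_spec
  simp only [slot, decide_eq_decide, href] at hs
  rcases h.axis_sub hr hj with h1 | h1
  · rw [h1, hs.1 h1]
  rcases h.axis_sub hr hk with h2 | h2
  · rw [h2, hs.2 h2]
  rcases h.axis_sub hj hk with h3 | h3
  · exact h3.symm
  · refine absurd h2 ?_
    have := add_notMem h1 h3
    rwa [show 2 * δ i j - 2 * δ i hex.choose + (2 * δ i k - 2 * δ i j) =
      2 * δ i k - 2 * δ i hex.choose by ring] at this

lemma OnAxis.unique (h : SectorGraph G δ) {p : V × Bool} {a b : ZMod 16}
    (ha : OnAxis G δ p a) (hb : OnAxis G δ p b) : a = b := by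
  obtain ⟨j, hj, hsj, rfl⟩ := ha
  obtain ⟨k, hk, hsk, rfl⟩ := hb
  exact h.axis_eq_of_slot_eq hj hk (hsj.trans hsk.symm)

lemma OnAxis.sub_mem (h : SectorGraph G δ) {i : V} {b : Bool} {a a' : ZMod 16}
    (ha : OnAxis G δ (i, b) a) (ha' : OnAxis G δ (i, !b) a') :
    a' - a ∈ ({6, 8, 10} : Finset (ZMod 16)) := by
  obtain ⟨j, hj, hsj, rfl⟩ := ha
  obtain ⟨k, hk, hsk, rfl⟩ := ha'
  refine (h.axis_sub hj hk).resolve_left fun heq => ?_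
  simp only [slot] at hsj hsk heq
  rw [heq, hsj] at hsk
  simp at hsk

lemma eq_of_sector_eq (h : SectorGraph G δ) {i j k : V} (hj : G.Adj i j) (hk : G.Adj i k)
    (hs : slot G δ i j = slot G δ i k) (hv : (δ i j).val < 8 ↔ (δ i k).val < 8) : j = k := by
  by_contra hjk
  have := h.compat i j k hj hk hjk
  rw [eq_of_two_mul_eq (h.axis_eq_of_slot_eq hj hk hs) hv, sub_self] at this
  revert this
  decide

lemma step_rightUnique (h : SectorGraph G δ) : Relator.RightUnique (Step G δ) := by
  rintro ⟨i, b⟩ ⟨j, c⟩ ⟨k, d⟩ ⟨hj, hvj, hsj, htj⟩ ⟨hk, hvk, hsk, htk⟩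
  dsimp only at *
  have := h.eq_of_sector_eq hj hk (hsj.trans hsk.symm) (iff_of_true hvj hvk)
  subst this
  rw [← htj, ← htk]

lemma step_leftUnique (h : SectorGraph G δ) : Relator.RightUnique (Function.swap (Step G δ)) := by
  rintro ⟨i, b⟩ ⟨j, c⟩ ⟨k, d⟩ ⟨hj, hvj, hsj, htj⟩ ⟨hk, hvk, hsk, htk⟩
  dsimp only at *
  have hvj' : ¬ (δ i j).val < 8 := by rwa [h.reverse j i hj.ne, val_add_eight, not_not]
  have hvk' : ¬ (δ i k).val < 8 := by rwa [h.reverse k i hk.ne, val_add_eight, not_not]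
  have := h.eq_of_sector_eq hj.symm hk.symm (htj.trans htk.symm) (iff_of_false hvj' hvk')
  subst this
  rw [← hsj, ← hsk]

lemma transGen_step (h : SectorGraph G δ) {p q : V × Bool} (hpq : TransGen (Step G δ) p q) :
    p.1 ≠ q.1 ∧ (δ p.1 q.1).val < 8 ∧ OnAxis G δ p (2 * δ p.1 q.1) ∧
      OnAxis G δ q (2 * δ p.1 q.1) := by
  have key : ∀ {p q}, Step G δ p q → OnAxis G δ q (2 * δ p.1 q.1) := fun {p q} hs =>
    ⟨p.1, hs.1.symm, hs.2.2.2, h.axis_symm hs.1.ne⟩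
  induction hpq with
  | single hs => exact ⟨hs.1.ne, hs.2.1, ⟨_, hs.1, hs.2.2.1, rfl⟩, key hs⟩
  | @tail b c _ hs ih =>
    obtain ⟨hne, hv, hp, hb⟩ := ih
    have hax : 2 * δ p.1 b.1 = 2 * δ b.1 c.1 := hb.unique h ⟨_, hs.1, hs.2.2.1, rfl⟩
    have heq := eq_of_two_mul_eq hax (iff_of_true hv hs.2.1)
    obtain ⟨hne', hadd⟩ := h.add _ _ _ hne hs.1.ne heq
    rw [hadd]
    refine ⟨hne', hv, hp, ?_⟩
    rw [heq]
    exact key hs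

lemma exists_top [Finite V] (h : SectorGraph G δ) (p : V × Bool) :
    ∃ t, ReflTransGen (Step G δ) p t ∧ ∀ q, ¬ Step G δ t q := by
  have : IsTrans (V × Bool) (Function.swap (TransGen (Step G δ))) :=
    ⟨fun a b c hab hbc => TransGen.trans hbc hab⟩
  have : Std.Irrefl (Function.swap (TransGen (Step G δ))) :=
    ⟨fun a ha => (h.transGen_step ha).1 rfl⟩
  induction p using (Finite.wellFounded_of_trans_of_irrefl
    (Function.swap (TransGen (Step G δ)))).induction with
  | _ p ih =>
    by_cases hp : ∃ q, Step G δ p q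
    · obtain ⟨q, hq⟩ := hp
      obtain ⟨t, ht, htop⟩ := ih q (TransGen.single hq)
      exact ⟨t, ht.head hq, htop⟩
    · exact ⟨p, .refl, not_exists.1 hp⟩

lemma onAxis_of_common_top (h : SectorGraph G δ) {p q t : V × Bool}
    (hp : ReflTransGen (Step G δ) p t) (hq : ReflTransGen (Step G δ) q t) (hpq : p ≠ q) :
    p.1 ≠ q.1 ∧ OnAxis G δ p (2 * δ p.1 q.1) ∧ OnAxis G δ q (2 * δ p.1 q.1) := by
  rcases ReflTransGen.total_of_right_unique h.step_leftUnique
    (reflTransGen_swap.2 hp) (reflTransGen_swap.2 hq) with hr | hr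
  · rw [reflTransGen_swap] at hr
    rcases reflTransGen_iff_eq_or_transGen.1 hr with rfl | hr
    · exact absurd rfl hpq
    · obtain ⟨hne, -, h1, h2⟩ := h.transGen_step hr
      rw [h.axis_symm hne]
      exact ⟨hne.symm, h2, h1⟩
  · rw [reflTransGen_swap] at hr
    rcases reflTransGen_iff_eq_or_transGen.1 hr with rfl | hr
    · exact absurd rfl hpq
    · obtain ⟨hne, -, h1, h2⟩ := h.transGen_step hr
      exact ⟨hne, h1, h2⟩

lemma card_edgeFinset_add_card_top_le [Fintype V] [Fintype G.edgeSet] (h : SectorGraph G δ) :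
    G.edgeFinset.card + Nat.card {t : V × Bool // ∀ q, ¬ Step G δ t q} ≤
      2 * Fintype.card V := by
  classical
  rcases isEmpty_or_nonempty V with hV | hV
  · simp [Finset.eq_empty_of_isEmpty]
  have hup : ∀ e ∈ G.edgeFinset, ∃ p q : V × Bool, Step G δ p q ∧ e = s(p.1, q.1) := by
    intro e he
    induction e with | _ i j =>
    rw [SimpleGraph.mem_edgeFinset, SimpleGraph.mem_edgeSet] at he
    by_cases hv : (δ i j).val < 8
    · exact ⟨(i, slot G δ i j), (j, slot G δ j i), ⟨he, hv, rfl, rfl⟩, rfl⟩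
    · refine ⟨(j, slot G δ j i), (i, slot G δ i j), ⟨he.symm, ?_, rfl, rfl⟩, Sym2.eq_swap⟩
      dsimp only
      rwa [h.reverse i j he.ne, val_add_eight]
  choose! tail head hstep heq using hup
  have hle : G.edgeFinset.card ≤
      (Finset.univ.filter fun p : V × Bool => ∃ q, Step G δ p q).card := by
    refine Finset.card_le_card_of_injOn tail (fun e he => ?_) fun e he f hf hef => ?_
    · exact Finset.mem_coe.2 (Finset.mem_filter.2 ⟨Finset.mem_univ _, _, hstep e he⟩)
    · have h2 := hstep f hf
      rw [← hef] at h2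
      rw [heq e he, heq f hf, h.step_rightUnique (hstep e he) h2, hef]
  have hsplit := Finset.card_filter_add_card_filter_not (s := (Finset.univ : Finset (V × Bool)))
    (fun p => ∃ q, Step G δ p q)
  rw [Nat.card_eq_fintype_card, Fintype.card_subtype]
  simp only [not_exists, Finset.card_univ, Fintype.card_prod, Fintype.card_bool] at hsplit
  omega

/-- Every vertex lies on two chains, chains meet at most once, and no three chains meet pairwise,
so Mantel's theorem bounds the number of vertices by the number of chains. -/
lemma four_mul_card_le [Fintype V] (h : SectorGraph G δ) :
    4 * Fintype.card V ≤ Nat.card {t : V × Bool // ∀ q, ¬ Step G δ t q} ^ 2 := by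
  classical
  rw [Nat.card_eq_fintype_card]
  choose top htop hmax using h.exists_top
  have hcommon : ∀ {p q}, top p = top q → p ≠ q →
      p.1 ≠ q.1 ∧ OnAxis G δ p (2 * δ p.1 q.1) ∧ OnAxis G δ q (2 * δ p.1 q.1) :=
    fun {p q} hpq hne => h.onAxis_of_common_top (htop p) (hpq ▸ htop q) hne
  have hsep : ∀ i b, top (i, b) ≠ top (i, !b) := fun i b heq =>
    (hcommon heq (by simp)).1 rfl
  let C : SimpleGraph {t : V × Bool // ∀ q, ¬ Step G δ t q} :=
    { Adj := fun s t => ∃ i b, top (i, b) = s.1 ∧ top (i, !b) = t.1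
      symm := ⟨fun s t ⟨i, b, hs, ht⟩ => ⟨i, !b, ht, by rwa [Bool.not_not]⟩⟩
      loopless := ⟨fun s ⟨i, b, hs, ht⟩ => hsep i b (hs.trans ht.symm)⟩ }
  have hfree : C.CliqueFree 3 := by
    intro s hs
    obtain ⟨t₁, t₂, t₃, h12, h13, h23, -⟩ := SimpleGraph.is3Clique_iff.1 hs
    have n12 := h12.ne
    have n13 := h13.ne
    have n23 := h23.ne
    obtain ⟨i, b, hi1, hi2⟩ := h12
    obtain ⟨j, c, hj1, hj3⟩ := h13
    obtain ⟨k, d, hk2, hk3⟩ := h23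
    obtain ⟨-, ai1, aj1⟩ := hcommon (hi1.trans hj1.symm) (by
      rintro heq
      cases heq
      exact n23 (Subtype.ext (hi2.symm.trans hj3)))
    obtain ⟨-, ai2, ak2⟩ := hcommon (hi2.trans hk2.symm) (by
      rintro heq
      cases heq
      exact n13 (Subtype.ext (by rw [← hi1, ← hk3, Bool.not_not])))
    obtain ⟨-, aj3, ak3⟩ := hcommon (hj3.trans hk3.symm) (by
      rintro heq
      obtain ⟨rfl, hcd⟩ := Prod.mk.inj heq
      rw [Bool.not_inj hcd] at hj1
      exact n12 (Subtype.ext (hj1.symm.trans hk2)))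
    have s12 := ai1.sub_mem h ai2
    have s13 := aj1.sub_mem h aj3
    have s23 := ak2.sub_mem h ak3
    refine add_notMem s12 s23 ?_
    rwa [sub_add_sub_cancel']
  have hcard : Fintype.card V ≤ C.edgeFinset.card := by
    rw [← Finset.card_univ]
    refine Finset.card_le_card_of_injOn
      (fun i => s(⟨top (i, false), hmax _⟩, ⟨top (i, true), hmax _⟩)) (fun i _ => ?_)
      fun i _ j _ hij => ?_
    · simp only [Finset.mem_coe, SimpleGraph.mem_edgeFinset, SimpleGraph.mem_edgeSet]
      exact ⟨i, false, rfl, rfl⟩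
    · by_contra hne
      have hb : ∃ b, top (i, false) = top (j, b) ∧ top (i, !false) = top (j, !b) := by
        simpa [Sym2.eq_iff] using hij
      obtain ⟨b, h1, h2⟩ := hb
      have a1 := (hcommon h1 (by simp [hne])).2.1
      have a2 := (hcommon h2 (by simp [hne])).2.1
      have := a1.sub_mem h a2
      simp at this
      revert this
      decide
  have hturan := hfree.card_edgeFinset_le
  dsimp only at hturan
  have hchoose : ∀ m : ℕ, (m % 2).choose 2 = 0 := fun m =>
    Nat.choose_eq_zero_of_lt (Nat.mod_lt _ two_pos)
  rw [hchoose] at hturan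
  omega

end SectorGraph

/-- The sector of opening `π / 8`, with offset `s`, that contains `z`. -/
def sector (s : ℝ) (z : ℂ) : ZMod 16 := (⌊z.arg * (8 / π) - s⌋ : ℤ)

lemma sector_eq_floor {s t : ℝ} {z z' : ℂ} (h : (z'.arg : Real.Angle) = (z.arg + t : ℝ)) :
    sector s z' = ((⌊z.arg * (8 / π) - s + t * (8 / π)⌋ : ℤ) : ZMod 16) := by
  obtain ⟨m, hm⟩ := Real.Angle.angle_eq_iff_two_pi_dvd_sub.1 h
  have hπ := Real.pi_ne_zero
  have : z'.arg * (8 / π) - s = z.arg * (8 / π) - s + t * (8 / π) + ((16 * m : ℤ) : ℝ) := by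
    rw [show z'.arg = z.arg + t + 2 * π * m by linarith]
    push_cast
    field_simp
    ring
  rw [sector, this, Int.floor_add_intCast]
  push_cast
  rw [show (16 : ZMod 16) = 0 from rfl]
  simp

lemma sector_neg (s : ℝ) {z : ℂ} (hz : z ≠ 0) : sector s (-z) = sector s z + 8 := by
  have h : ((-z).arg : Real.Angle) = (z.arg + π : ℝ) := by
    rw [Complex.arg_neg_coe_angle hz, Real.Angle.coe_add]
  rw [sector_eq_floor h, sector, show π * (8 / π) = ((8 : ℤ) : ℝ) by
    rw [mul_div_cancel₀ _ Real.pi_ne_zero]; norm_num, Int.floor_add_intCast]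
  push_cast
  rfl

/-- The polar form of `z` relative to the lower boundary ray of its sector. -/
lemma exists_polar_of_sector {s : ℝ} {z : ℂ} {k : ℤ} (h : sector s z = k) :
    ∃ a : ℝ, 0 ≤ a ∧ a < π / 8 ∧
      z = ‖z‖ * Complex.exp (((k + s) * (π / 8) + a : ℝ) * Complex.I) := by
  have hπ := Real.pi_pos
  obtain ⟨m, hm⟩ := (ZMod.intCast_eq_intCast_iff_dvd_sub _ _ 16).1 h
  refine ⟨z.arg - (k + s) * (π / 8) + 2 * π * m, ?_, ?_, ?_⟩
  all_goals
    have hk : ((⌊z.arg * (8 / π) - s⌋ : ℤ) : ℝ) = k - 16 * m := by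
      rw [← sub_sub_cancel k ⌊z.arg * (8 / π) - s⌋, hm]; push_cast; ring
  · have := Int.floor_le (z.arg * (8 / π) - s)
    rw [hk] at this
    have h2 := mul_le_mul_of_nonneg_right this (by positivity : 0 ≤ π / 8)
    rw [show (z.arg * (8 / π) - s) * (π / 8) = z.arg - s * (π / 8) by field_simp] at h2
    linarith
  · have := Int.lt_floor_add_one (z.arg * (8 / π) - s)
    rw [hk] at this
    have h2 := mul_lt_mul_of_pos_right this (by positivity : 0 < π / 8)
    rw [show (z.arg * (8 / π) - s) * (π / 8) = z.arg - s * (π / 8) by field_simp] at h2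
    linarith
  · conv_lhs => rw [← Complex.norm_mul_exp_arg_mul_I z]
    congr 1
    rw [Complex.exp_eq_exp_iff_exists_int]
    exact ⟨-m, by push_cast; ring⟩

lemma sector_eq_of_polar {s a r : ℝ} {k : ℤ} (hr : 0 < r) (ha : 0 ≤ a) (ha' : a < π / 8) :
    sector s (r * Complex.exp (((k + s) * (π / 8) + a : ℝ) * Complex.I)) = k := by
  have hπ := Real.pi_pos
  have h : ((r * Complex.exp (((k + s) * (π / 8) + a : ℝ) * Complex.I)).arg : Real.Angle) =
      ((1 : ℂ).arg + ((k + s) * (π / 8) + a) : ℝ) := by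
    rw [Complex.arg_real_mul _ hr, Complex.arg_exp_mul_I, Real.Angle.coe_toIocMod]
    simp
  rw [sector_eq_floor h]
  congr 1
  rw [Int.floor_eq_iff, Complex.arg_one]
  have : 0 * (8 / π) - s + ((k + s) * (π / 8) + a) * (8 / π) = k + a * (8 / π) := by
    field_simp
    ring
  rw [this]
  have h1 : a * (8 / π) < π / 8 * (8 / π) := mul_lt_mul_of_pos_right ha' (by positivity)
  rw [show π / 8 * (8 / π) = 1 by field_simp] at h1
  constructor
  · have : 0 ≤ a * (8 / π) := by positivity
    linarith
  · linarith

/-- A sum of two vectors in a cone of opening `w ≤ π / 2` stays in the cone. -/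
lemma exists_polar_add {r r' a a' w : ℝ} (hr : 0 < r) (hr' : 0 < r') (ha : 0 ≤ a) (haw : a < w)
    (ha' : 0 ≤ a') (haw' : a' < w) (hw : w ≤ π / 2) :
    ∃ R b : ℝ, 0 < R ∧ 0 ≤ b ∧ b < w ∧
      (r * Complex.exp (a * Complex.I) + r' * Complex.exp (a' * Complex.I) : ℂ) =
        R * Complex.exp (b * Complex.I) := by
  set ζ : ℂ := r * Complex.exp (a * Complex.I) + r' * Complex.exp (a' * Complex.I) with hζ
  have hre : ζ.re = r * Real.cos a + r' * Real.cos a' := by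
    simp [hζ, Complex.exp_re, Complex.exp_im]
  have him : ζ.im = r * Real.sin a + r' * Real.sin a' := by
    simp [hζ, Complex.exp_re, Complex.exp_im]
  have hπ := Real.pi_pos
  have hpos : 0 < ζ.re := by
    rw [hre]
    have := Real.cos_pos_of_mem_Ioo (x := a) ⟨by linarith, by linarith⟩
    have := Real.cos_pos_of_mem_Ioo (x := a') ⟨by linarith, by linarith⟩
    positivity
  have hnn : 0 ≤ ζ.im := by
    rw [him]
    have := Real.sin_nonneg_of_nonneg_of_le_pi (x := a) ha (by linarith)
    have := Real.sin_nonneg_of_nonneg_of_le_pi (x := a') ha' (by linarith)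
    positivity
  have hζ0 : ζ ≠ 0 := fun h => by simp [h] at hpos
  have hR : 0 < ‖ζ‖ := norm_pos_iff.2 hζ0
  refine ⟨‖ζ‖, ζ.arg, hR, Complex.arg_nonneg_iff.2 hnn, ?_,
    (Complex.norm_mul_exp_arg_mul_I ζ).symm⟩
  by_contra! hb
  have hbpi := (abs_lt.1 (Complex.abs_arg_lt_pi_div_two_iff.2 (Or.inl hpos))).2
  have h1 : 0 ≤ Real.sin (ζ.arg - w) :=
    Real.sin_nonneg_of_nonneg_of_le_pi (by linarith) (by linarith)
  have h2 : ‖ζ‖ * Real.sin (ζ.arg - w) = r * Real.sin (a - w) + r' * Real.sin (a' - w) := by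
    have e1 : ‖ζ‖ * Real.cos ζ.arg = ζ.re := Complex.norm_mul_cos_arg ζ
    have e2 : ‖ζ‖ * Real.sin ζ.arg = ζ.im := Complex.norm_mul_sin_arg ζ
    simp only [Real.sin_sub]
    rw [hre] at e1
    rw [him] at e2
    linear_combination Real.cos w * e2 - Real.sin w * e1
  have h3 : Real.sin (a - w) < 0 := Real.sin_neg_of_neg_of_neg_pi_lt (by linarith) (by linarith)
  have h4 : Real.sin (a' - w) < 0 := Real.sin_neg_of_neg_of_neg_pi_lt (by linarith) (by linarith)
  nlinarith [mul_nonneg hR.le h1, mul_pos_of_neg_of_neg h3 h4, mul_pos hr (neg_pos.2 h3),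
    mul_pos hr' (neg_pos.2 h4)]

lemma sector_add {s : ℝ} {z z' : ℂ} (hz : z ≠ 0) (hz' : z' ≠ 0) (h : sector s z = sector s z') :
    z + z' ≠ 0 ∧ sector s (z + z') = sector s z := by
  have hπ := Real.pi_pos
  obtain ⟨k, hk⟩ : ∃ k : ℤ, sector s z = k := ⟨_, rfl⟩
  obtain ⟨a, ha, haw, hza⟩ := exists_polar_of_sector hk
  obtain ⟨a', ha', haw', hza'⟩ := exists_polar_of_sector (h ▸ hk)
  obtain ⟨R, b, hR, hb, hbw, hsum⟩ := exists_polar_add (norm_pos_iff.2 hz) (norm_pos_iff.2 hz')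
    ha haw ha' haw' (by linarith)
  have hsplit : ∀ c : ℝ, Complex.exp (((k + s) * (π / 8) + c : ℝ) * Complex.I) =
      Complex.exp (((k + s) * (π / 8) : ℝ) * Complex.I) * Complex.exp (c * Complex.I) := by
    intro c
    rw [← Complex.exp_add]
    push_cast
    ring_nf
  have hzz : z + z' = R * Complex.exp (((k + s) * (π / 8) + b : ℝ) * Complex.I) := by
    rw [hsplit] at hza hza' ⊢
    linear_combination hza + hza' +
      Complex.exp (((k + s) * (π / 8) : ℝ) * Complex.I) * hsum
  constructor
  · rw [hzz]
    exact mul_ne_zero (Complex.ofReal_ne_zero.2 hR.ne') (Complex.exp_ne_zero _)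
  · rw [hzz, sector_eq_of_polar hR hb hbw, hk]

/-- The plane as complex numbers. -/
def toC (p : Pt) : ℂ := ⟨p 0, p 1⟩

lemma toC_sub (p q : Pt) : toC (p - q) = toC p - toC q := by
  apply Complex.ext <;> simp [toC]

lemma toC_injective : Function.Injective toC := by
  intro p q h
  have h0 := congrArg Complex.re h
  have h1 := congrArg Complex.im h
  ext i
  fin_cases i
  · exact h0
  · exact h1

lemma cwAngle_mem (u v : Pt) : 0 ≤ cwAngle u v ∧ cwAngle u v ≤ 2 * π := by
  have h1 := Complex.neg_pi_lt_arg (toC u * (starRingEnd ℂ) (toC v))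
  have h2 := Complex.arg_le_pi (toC u * (starRingEnd ℂ) (toC v))
  have hπ := Real.pi_pos
  simp only [cwAngle]
  simp only [toC] at h1 h2
  split_ifs with h <;> constructor <;> linarith

lemma arg_eq_sub_cwAngle {u v : Pt} (hu : toC u ≠ 0) (hv : toC v ≠ 0) :
    ((toC v).arg : Real.Angle) = ((toC u).arg + -cwAngle u v : ℝ) := by
  have h : (cwAngle u v : Real.Angle) = (toC u * (starRingEnd ℂ) (toC v)).arg := by
    simp only [cwAngle]
    split_ifs
    · simp [toC]
    · rfl
  rw [Real.Angle.coe_add, Real.Angle.coe_neg, h, Complex.arg_mul_coe_angle hu (by simpa using hv),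
    Complex.arg_conj_coe_angle]
  abel

lemma intervalIntegrable_fract_sub (c : ℝ) :
    IntervalIntegrable (fun s => Int.fract (c - s)) MeasureTheory.volume 0 1 := by
  refine (intervalIntegrable_const (c := (1 : ℝ))).mono_fun
    ((measurable_fract.comp (measurable_const.sub measurable_id)).aestronglyMeasurable) ?_
  refine Filter.Eventually.of_forall fun s => ?_
  dsimp only
  rw [norm_one, Real.norm_eq_abs, abs_of_nonneg (Int.fract_nonneg (c - s))]
  exact (Int.fract_lt_one (c - s)).le

lemma floor_sub_floor (a b s : ℝ) :
    (⌊b - s⌋ : ℝ) - ⌊a - s⌋ = (b - a) + (Int.fract (a - s) - Int.fract (b - s)) := by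
  simp only [Int.fract]
  ring

lemma intervalIntegrable_floor_sub_floor (a b : ℝ) :
    IntervalIntegrable (fun s => (⌊b - s⌋ : ℝ) - ⌊a - s⌋) MeasureTheory.volume 0 1 := by
  simp only [floor_sub_floor]
  exact intervalIntegrable_const.add
    ((intervalIntegrable_fract_sub a).sub (intervalIntegrable_fract_sub b))

lemma integral_floor_sub_floor (a b : ℝ) :
    ∫ s in (0 : ℝ)..1, ((⌊b - s⌋ : ℝ) - ⌊a - s⌋) = b - a := by
  have hper : ∀ c : ℝ, ∫ s in (0 : ℝ)..1, Int.fract (c - s) = ∫ s in (0 : ℝ)..1, Int.fract s := by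
    intro c
    rw [intervalIntegral.integral_comp_sub_left (fun t => Int.fract t) c]
    have := Function.Periodic.intervalIntegral_add_eq (f := fun t : ℝ => Int.fract t) (T := 1)
      (fun t => Int.fract_add_one t) (c - 1) 0
    simpa using this
  have ha := intervalIntegrable_fract_sub a
  have hb := intervalIntegrable_fract_sub b
  simp only [floor_sub_floor]
  rw [intervalIntegral.integral_add (by simp) (ha.sub hb),
    intervalIntegral.integral_sub ha hb, hper, hper]
  simp

lemma floor_add_sub_floor_mem {t : ℝ} (y : ℝ) {n : ℤ} (h1 : n - 1 ≤ t) (h2 : t ≤ n + 1) :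
    ⌊y + t⌋ - ⌊y⌋ ∈ Finset.Icc (n - 1) (n + 1) := by
  have l : ⌊y + ((n - 1 : ℤ) : ℝ)⌋ ≤ ⌊y + t⌋ := Int.floor_mono (by push_cast; linarith)
  have u : ⌊y + t⌋ ≤ ⌊y + ((n + 1 : ℤ) : ℝ)⌋ := Int.floor_mono (by push_cast; linarith)
  rw [Int.floor_add_intCast] at l u
  rw [Finset.mem_Icc]
  omega

lemma V3Hyp.nonneg {ε : ℝ} {v3 : ℝ → ℝ} (h : V3Hyp ε v3) {θ : ℝ} (h0 : 0 ≤ θ)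
    (h1 : θ ≤ 2 * π) : 0 ≤ v3 θ := by
  by_cases hθ : θ ∈ ({π / 2, π, 3 * π / 2} : Set ℝ)
  · rcases hθ with rfl | rfl | rfl
    exacts [h.zero_pi_half.ge, h.zero_pi.ge, h.zero_three_pi_half.ge]
  · exact (h.pos θ h0 h1 hθ).le

/-- Averaged over the offset of the sectors, half of the angle energy of `u` and `v` pays for the
event that their sectors are not in one of the allowed relative positions. -/
lemma exists_majorant {ε : ℝ} (hε : 0 < ε) (hε' : ε < 1 / 10) {v3 : ℝ → ℝ} (h : V3Hyp ε v3)
    {u v : Pt} (hu : toC u ≠ 0) (hv : toC v ≠ 0) :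
    ∃ g : ℝ → ℝ, IntervalIntegrable g MeasureTheory.volume 0 1 ∧
      ∫ s in (0 : ℝ)..1, g s ≤ v3 (cwAngle u v) / 2 ∧
      ∀ s, 0 ≤ g s ∧ (sector s (toC v) - sector s (toC u) ∉
        ({3, 4, 5, 8, 11, 12, 13} : Finset (ZMod 16)) → 1 ≤ g s) := by
  have hπ := Real.pi_gt_three
  obtain ⟨hθ0, hθ1⟩ := cwAngle_mem u v
  have harg := arg_eq_sub_cwAngle hu hv
  set θ := cwAngle u v
  have hsec : ∀ s, sector s (toC v) - sector s (toC u) =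
      ((⌊(toC u).arg * (8 / π) - s + -θ * (8 / π)⌋ - ⌊(toC u).arg * (8 / π) - s⌋ : ℤ) :
        ZMod 16) := by
    intro s
    rw [sector_eq_floor harg, sector]
    push_cast
    rfl
  set y := (toC u).arg * (8 / π)
  have hscale : ∀ {a b : ℝ}, a * π / 8 ≤ b → a ≤ b * (8 / π) := fun {a b} hab => by
    rw [mul_div_assoc', le_div_iff₀ (by linarith)]
    linarith
  have hscale' : ∀ {a b : ℝ}, b ≤ a * π / 8 → b * (8 / π) ≤ a := fun {a b} hab => by
    rw [mul_div_assoc', div_le_iff₀ (by linarith)]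
    linarith
  have hnn := h.nonneg hθ0 hθ1
  by_cases hgood : θ ∈ Set.Icc (π / 2 - ε) (π / 2 + ε) ∪ Set.Icc (π - ε) (π + ε) ∪
        Set.Icc (3 * π / 2 - ε) (3 * π / 2 + ε)
  · rcases hgood with (⟨h1, h2⟩ | hstraight) | ⟨h1, h2⟩
    · refine ⟨0, intervalIntegrable_const, by simpa using div_nonneg hnn zero_le_two,
        fun s => ⟨le_rfl, fun hbad => ?_⟩⟩
      refine absurd ?_ hbad
      rw [hsec]
      have := floor_add_sub_floor_mem (t := -θ * (8 / π)) (y - s) (n := -4)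
        (hscale (by push_cast; linarith)) (hscale' (by push_cast; linarith))
      generalize ⌊y - s + -θ * (8 / π)⌋ - ⌊y - s⌋ = e at this ⊢
      fin_cases this <;> decide
    · set b := y + (π - θ) * (8 / π) with hb
      refine ⟨fun s => ⌊max y b - s⌋ - ⌊min y b - s⌋, intervalIntegrable_floor_sub_floor _ _,
        ?_, fun s => ?_⟩
      · rw [integral_floor_sub_floor, max_sub_min_eq_abs, hb, add_sub_cancel_left, abs_mul,
          abs_of_nonneg (by positivity : 0 ≤ 8 / π), abs_sub_comm]
        have hs := h.slope θ hstraight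
        have hc : 8 / π ≤ 2 * (π / 6 - ε)⁻¹ := by
          rw [← div_eq_mul_inv, div_le_div_iff₀ (by linarith) (by linarith)]
          linarith
        have := mul_le_mul_of_nonneg_left hc (abs_nonneg (θ - π))
        linarith
      · have hle : ⌊min y b - s⌋ ≤ ⌊max y b - s⌋ :=
          Int.floor_mono (sub_le_sub_right min_le_max s)
        refine ⟨by simpa using hle, fun hbad => ?_⟩
        have hlt : ⌊min y b - s⌋ < ⌊max y b - s⌋ := by
          refine lt_of_le_of_ne hle fun heq => hbad ?_
          have heq' : ⌊b - s⌋ = ⌊y - s⌋ := by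
            rcases le_total y b with hyb | hyb
            · rw [min_eq_left hyb, max_eq_right hyb] at heq
              exact heq.symm
            · rwa [min_eq_right hyb, max_eq_left hyb] at heq
          have hshift : y - s + -θ * (8 / π) = b - s + ((-8 : ℤ) : ℝ) := by
            rw [hb]
            push_cast
            field_simp
            ring
          rw [hsec, hshift, Int.floor_add_intCast, heq', add_sub_cancel_left]
          decide
        have : (⌊min y b - s⌋ : ℝ) + 1 ≤ ⌊max y b - s⌋ := by exact_mod_cast hlt
        linarith
    · refine ⟨0, intervalIntegrable_const, by simpa using div_nonneg hnn zero_le_two,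
        fun s => ⟨le_rfl, fun hbad => ?_⟩⟩
      refine absurd ?_ hbad
      rw [hsec]
      have := floor_add_sub_floor_mem (t := -θ * (8 / π)) (y - s) (n := -12)
        (hscale (by push_cast; linarith)) (hscale' (by push_cast; linarith))
      generalize ⌊y - s + -θ * (8 / π)⌋ - ⌊y - s⌋ = e at this ⊢
      fin_cases this <;> decide
  · refine ⟨1, intervalIntegrable_const, ?_, fun s => ⟨zero_le_one, fun _ => le_rfl⟩⟩
    have hlarge := h.large θ hθ0 hθ1 hgood
    have h1 : 4 ≤ 4 / (1 - ε) ^ 2 := by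
      rw [le_div_iff₀ (by nlinarith)]
      nlinarith
    have h2 : 1 ≤ (Real.sqrt 2 + 1 / 2) ^ 2 := by
      nlinarith [Real.sqrt_nonneg 2, Real.sq_sqrt (show (0 : ℝ) ≤ 2 by norm_num)]
    simp only [Pi.one_apply, intervalIntegral.integral_const, sub_zero, smul_eq_mul, mul_one]
    nlinarith

lemma exists_le_of_integral_le {f : ℝ → ℝ} {c : ℝ}
    (hf : IntervalIntegrable f MeasureTheory.volume 0 1) (h : ∫ s in (0 : ℝ)..1, f s ≤ c) :
    ∃ s, f s ≤ c := by
  by_contra! hlt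
  have := intervalIntegral.intervalIntegral_pos_of_pos (f := fun s => f s - c)
    (hf.sub intervalIntegrable_const) (fun s => sub_pos.2 (hlt s)) zero_lt_one
  rw [intervalIntegral.integral_sub hf intervalIntegrable_const] at this
  simp only [intervalIntegral.integral_const, sub_zero, one_smul] at this
  linarith

/-- For some offset of the sectors, half of the total angle energy pays for all the pairs of
vectors whose sectors are not in one of the allowed relative positions. -/
lemma exists_offset {ι : Type*} {ε : ℝ} (hε : 0 < ε) (hε' : ε < 1 / 10) {v3 : ℝ → ℝ}
    (h : V3Hyp ε v3) (P : Finset ι) (u v : ι → Pt) (hu : ∀ a ∈ P, toC (u a) ≠ 0)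
    (hv : ∀ a ∈ P, toC (v a) ≠ 0) :
    ∃ s, ((P.filter fun a => sector s (toC (v a)) - sector s (toC (u a)) ∉
      ({3, 4, 5, 8, 11, 12, 13} : Finset (ZMod 16))).card : ℝ) ≤
        (1 / 2) * ∑ a ∈ P, v3 (cwAngle (u a) (v a)) := by
  have hex : ∀ a ∈ P, _ := fun a ha => exists_majorant hε hε' h (hu a ha) (hv a ha)
  choose! g hint hle hg using hex
  obtain ⟨s, hs⟩ := exists_le_of_integral_le (f := fun s => ∑ a ∈ P, g a s)
    (c := (1 / 2) * ∑ a ∈ P, v3 (cwAngle (u a) (v a)))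
    (by simpa only [Finset.sum_fn] using IntervalIntegrable.sum P hint) (by
      rw [intervalIntegral.integral_finsetSum hint, Finset.mul_sum]
      exact Finset.sum_le_sum fun a ha => (hle a ha).trans_eq (by ring))
  refine ⟨s, le_trans ?_ hs⟩
  rw [Finset.card_filter, Nat.cast_sum]
  refine Finset.sum_le_sum fun a ha => ?_
  split_ifs with hbad
  · simpa using (hg a ha s).1
  · simpa using (hg a ha s).2 hbad

/-- The graph of pairs of points at distance at most `r0`. -/
def bondGraph (r0 : ℝ) {n : ℕ} (x : Fin n → Pt) : SimpleGraph (Fin n) where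
  Adj i j := i ≠ j ∧ dist (x i) (x j) ≤ r0
  symm := ⟨fun i j h => ⟨h.1.symm, by rw [dist_comm]; exact h.2⟩⟩
  loopless := ⟨fun i h => h.1 rfl⟩

lemma ereal_coe_sum {ι : Type*} (S : Finset ι) (f : ι → ℝ) :
    ((∑ i ∈ S, f i : ℝ) : EReal) = ∑ i ∈ S, (f i : EReal) :=
  map_sum (⟨⟨Real.toEReal, EReal.coe_zero⟩, EReal.coe_add⟩ : ℝ →+ EReal) f S

open Classical in
lemma neg_card_le_energy {ε r0 : ℝ} {v2 : ℝ → EReal} (h2 : V2Hyp ε r0 v2) (v3 : ℝ → ℝ) {n : ℕ}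
    (x : Fin n → Pt) :
    ((-((bondGraph r0 x).edgeFinset.card : ℝ) + (1 / 2) * ∑ i : Fin n, ∑ j : Fin n, ∑ k : Fin n,
        (if i ≠ j ∧ i ≠ k ∧ j ≠ k ∧ dist (x i) (x j) ≤ r0 ∧ dist (x i) (x k) ≤ r0
          then v3 (cwAngle (x j - x i) (x k - x i)) else 0) : ℝ) : EReal) ≤
      energy r0 v2 v3 x := by
  have hpair : ((∑ i : Fin n, ∑ j : Fin n,
      (if (bondGraph r0 x).Adj i j then (-1 : ℝ) else 0) : ℝ) : EReal) ≤
      ∑ i : Fin n, ∑ j : Fin n, (if j ≠ i then v2 (dist (x i) (x j)) else 0) := by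
    rw [ereal_coe_sum]
    refine Finset.sum_le_sum fun i _ => ?_
    rw [ereal_coe_sum]
    refine Finset.sum_le_sum fun j _ => ?_
    by_cases hij : j = i
    · simp [hij]
    · by_cases hd : dist (x i) (x j) ≤ r0
      · rw [if_pos ⟨Ne.symm hij, hd⟩, if_pos hij]
        simpa using h2.ge_neg_one _ dist_nonneg
      · rw [if_neg fun h => hd h.2, if_pos hij, h2.eq_zero _ (not_le.1 hd).le]
        simp
  have hcount : ∑ i : Fin n, ∑ j : Fin n, (if (bondGraph r0 x).Adj i j then (-1 : ℝ) else 0) =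
      -(2 * ((bondGraph r0 x).edgeFinset.card : ℝ)) := by
    have hdeg := (bondGraph r0 x).sum_degrees_eq_twice_card_edges
    have hdeg' : ∑ i, ((bondGraph r0 x).degree i : ℝ) =
        2 * ((bondGraph r0 x).edgeFinset.card : ℝ) := by
      exact_mod_cast hdeg
    rw [← hdeg', ← Finset.sum_neg_distrib]
    refine Finset.sum_congr rfl fun i _ => ?_
    rw [← SimpleGraph.card_neighborFinset_eq_degree, SimpleGraph.neighborFinset_eq_filter,
      Finset.sum_ite, Finset.sum_const, Finset.sum_const_zero]
    simp
  rw [hcount] at hpair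
  rw [EReal.coe_add, energy]
  refine add_le_add ?_ le_rfl
  have hhalf : (0 : EReal) ≤ ((1 / 2 : ℝ) : EReal) := by
    exact_mod_cast (by norm_num : (0 : ℝ) ≤ 1 / 2)
  refine le_trans (le_of_eq ?_) (mul_le_mul_of_nonneg_left hpair hhalf)
  rw [← EReal.coe_mul]
  congr 1
  ring

/-- **Crystallization (lower bound).** There is `ε₀ ∈ (0, π/6)` such that for all admissible
potentials and every configuration of `n ≥ 1` distinct points,
`F(C_n) ≥ −2n + ⌈2√n⌉`. -/
theorem crystallization_lower_bound :
    ∃ ε₀ : ℝ, 0 < ε₀ ∧ ε₀ < π / 6 ∧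
      ∀ ε : ℝ, 0 < ε → ε < ε₀ →
      ∀ r0 : ℝ, 1 < r0 → r0 < Real.sqrt 2 →
      ∀ (v2 : ℝ → EReal) (v3 : ℝ → ℝ), V2Hyp ε r0 v2 → V3Hyp ε v3 →
      ∀ n : ℕ, 1 ≤ n → ∀ x : Fin n → Pt, Function.Injective x →
      ((-2 * (n : ℝ) + (⌈2 * Real.sqrt n⌉ : ℤ) : ℝ) : EReal) ≤ energy r0 v2 v3 x := by
  refine ⟨1 / 10, by norm_num, by linarith [Real.pi_gt_three], ?_⟩
  intro ε hε hε' r0 _ _ v2 v3 h2 h3 n _ x hx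
  classical
  refine le_trans (EReal.coe_le_coe_iff.2 ?_) (neg_card_le_energy h2 v3 x)
  set P : Finset (Fin n × Fin n × Fin n) := Finset.univ.filter fun a =>
    a.1 ≠ a.2.1 ∧ a.1 ≠ a.2.2 ∧ a.2.1 ≠ a.2.2 ∧ dist (x a.1) (x a.2.1) ≤ r0 ∧
      dist (x a.1) (x a.2.2) ≤ r0 with hP
  have hne : ∀ {i j : Fin n}, i ≠ j → toC (x j - x i) ≠ 0 := fun {i j} hij => by
    rw [toC_sub, sub_ne_zero]
    exact fun h => hij (hx (toC_injective h)).symm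
  obtain ⟨s, hs⟩ := exists_offset hε hε' h3 P (fun a => x a.2.1 - x a.1)
    (fun a => x a.2.2 - x a.1) (fun a ha => hne (Finset.mem_filter.1 ha).2.1)
    (fun a ha => hne (Finset.mem_filter.1 ha).2.2.1)
  have hsum : ∑ a ∈ P, v3 (cwAngle (x a.2.1 - x a.1) (x a.2.2 - x a.1)) =
      ∑ i : Fin n, ∑ j : Fin n, ∑ k : Fin n,
        (if i ≠ j ∧ i ≠ k ∧ j ≠ k ∧ dist (x i) (x j) ≤ r0 ∧ dist (x i) (x k) ≤ r0
          then v3 (cwAngle (x j - x i) (x k - x i)) else 0) := by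
    rw [hP, Finset.sum_filter, Fintype.sum_prod_type]
    simp only [Fintype.sum_prod_type]
  rw [hsum] at hs
  refine le_trans ?_ (add_le_add_right hs _)
  set δ : Fin n → Fin n → ZMod 16 := fun i j => sector s (toC (x j - x i)) with hδ
  set B := P.filter fun a => δ a.1 a.2.2 - δ a.1 a.2.1 ∉
    ({3, 4, 5, 8, 11, 12, 13} : Finset (ZMod 16))
  change _ ≤ -((bondGraph r0 x).edgeFinset.card : ℝ) + (B.card : ℝ)
  let G : SimpleGraph (Fin n) :=
    { Adj := fun i j => (bondGraph r0 x).Adj i j ∧ ∀ k, (i, j, k) ∉ B ∧ (j, i, k) ∉ B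
      symm := ⟨fun i j h => ⟨h.1.symm, fun k => (h.2 k).symm⟩⟩
      loopless := ⟨fun i h => h.1.1 rfl⟩ }
  have hG : SectorGraph G δ := by
    refine ⟨fun i j hij => ?_, fun i j k hij hjk heq => ?_, fun i j k hj hk hjk => ?_⟩
    · rw [hδ]
      dsimp only
      rw [← sector_neg s (hne hij), toC_sub, toC_sub, neg_sub]
    · obtain ⟨h0, hadd⟩ := sector_add (hne hij) (hne hjk) heq
      have hcomb : toC (x j - x i) + toC (x k - x j) = toC (x k - x i) := by
        simp only [toC_sub]
        ring
      rw [hcomb] at h0 hadd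
      refine ⟨?_, hadd⟩
      rintro rfl
      exact h0 (by rw [toC_sub, sub_self])
    · by_contra hbad
      refine (hj.2 k).1 (Finset.mem_filter.2 ⟨Finset.mem_filter.2 ⟨Finset.mem_univ _, ?_⟩, hbad⟩)
      exact ⟨hj.1.1, hk.1.1, hjk, hj.1.2, hk.1.2⟩
  have hcard : (bondGraph r0 x).edgeFinset.card ≤ G.edgeFinset.card + B.card := by
    have hsub : (bondGraph r0 x).edgeFinset ⊆
        G.edgeFinset ∪ B.image fun a => s(a.1, a.2.1) := by
      intro e he
      induction e with | _ i j =>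
      rw [SimpleGraph.mem_edgeFinset, SimpleGraph.mem_edgeSet] at he
      rw [Finset.mem_union, SimpleGraph.mem_edgeFinset, SimpleGraph.mem_edgeSet, Finset.mem_image]
      by_contra! hcon
      refine hcon.1 ⟨he, fun k => ⟨fun hk => hcon.2 _ hk rfl, fun hk => hcon.2 _ hk Sym2.eq_swap⟩⟩
    exact (Finset.card_le_card hsub).trans ((Finset.card_union_le _ _).trans
      (Nat.add_le_add_left Finset.card_image_le _))
  have hE := hG.card_edgeFinset_add_card_top_le
  have hM := hG.four_mul_card_le
  rw [Fintype.card_fin] at hE hM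
  generalize Nat.card {t : Fin n × Bool // ∀ q, ¬ SectorGraph.Step G δ t q} = m at hE hM
  have hceil : ⌈2 * Real.sqrt n⌉ ≤ (m : ℤ) := by
    rw [Int.ceil_le]
    have hM' : 4 * (n : ℝ) ≤ (m : ℝ) ^ 2 := by exact_mod_cast hM
    have hsq := Real.sq_sqrt (Nat.cast_nonneg (α := ℝ) n)
    push_cast
    refine abs_le_of_sq_le_sq' ?_ (Nat.cast_nonneg m) |>.2
    nlinarith
  have hceil' : ((⌈2 * Real.sqrt n⌉ : ℤ) : ℝ) ≤ m := by exact_mod_cast hceil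
  have hE' : (G.edgeFinset.card : ℝ) + m ≤ 2 * n := by exact_mod_cast hE
  have hcard' : ((bondGraph r0 x).edgeFinset.card : ℝ) ≤ G.edgeFinset.card + B.card := by
    exact_mod_cast hcard
  linarith

end
end

section
/- There exists ε₀ ∈ (0, π/6) such that for every ε ∈ (0, ε₀), every r₀ ∈ (1, √2), every pair of potentials v₂, v₃ satisfying assumptions (i₂)–(iii₂) and (i₃)–(iv₃), every integer n ≥ 1, and every configuration C_n of n distinct points in ℝ²: if F(C_n) = −2n + ⌈2√n⌉, then there exists a rigid motion (isometry) R of ℝ² such that R(C_n) ⊆ ℤ². -/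
open scoped Real

noncomputable section

/-- The square lattice `ℤ² ⊆ ℝ²`. -/
def latticeZ2 : Set Pt := {p | ∃ a b : ℤ, p 0 = (a : ℝ) ∧ p 1 = (b : ℝ)}

/-- The average of `⌊a + t⌋` over `t ∈ [0, 1]` is `a`, up to a constant independent of `a`. -/
lemma integral_floor_add (a : ℝ) :
    IntervalIntegrable (fun t : ℝ => (⌊a + t⌋ : ℝ)) MeasureTheory.volume 0 1 ∧
      ∫ t in (0 : ℝ)..1, (⌊a + t⌋ : ℝ) = a + ∫ t in (0 : ℝ)..1, (⌊t⌋ : ℝ) := by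
  have hint : ∀ b c d : ℝ,
      IntervalIntegrable (fun t : ℝ => (⌊b + t⌋ : ℝ)) MeasureTheory.volume c d := by
    intro b c d
    apply Monotone.intervalIntegrable
    intro s t hst
    have : ⌊b + s⌋ ≤ ⌊b + t⌋ := Int.floor_le_floor (by linarith)
    show (⌊b + s⌋ : ℝ) ≤ ⌊b + t⌋
    exact_mod_cast this
  refine ⟨hint a 0 1, ?_⟩
  have hper : Function.Periodic (fun t : ℝ => Int.fract t) 1 := fun t => Int.fract_add_one t
  have h1 := hper.intervalIntegral_add_eq a 0
  have h2 : ∀ c d : ℝ, ∫ t in c..d, Int.fract t = (d ^ 2 - c ^ 2) / 2 - ∫ t in c..d, (⌊t⌋ : ℝ) := by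
    intro c d
    have h0 := hint 0 c d
    simp only [zero_add] at h0
    simp only [Int.fract]
    rw [intervalIntegral.integral_sub (by simp) h0, integral_id]
  rw [h2, h2] at h1
  have h3 : ∫ t in (0 : ℝ)..1, (⌊a + t⌋ : ℝ) = ∫ t in a..(a + 1), (⌊t⌋ : ℝ) := by
    rw [intervalIntegral.integral_comp_add_left (fun t : ℝ => (⌊t⌋ : ℝ))]
    simp
  simp only [zero_add] at h1
  rw [h3]
  linarith

/-- A common shift `t` for which the total number of integers separating the pairs
`a k + t`, `b k + t` does not exceed the total distance. -/
lemma exists_shift_sum_floor_sub_le {κ : Type*} (s : Finset κ) (a b : κ → ℝ) :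
    ∃ t : ℝ, ∑ k ∈ s, |(⌊a k + t⌋ : ℝ) - ⌊b k + t⌋| ≤ ∑ k ∈ s, |a k - b k| := by
  have key : ∀ k, IntervalIntegrable (fun t : ℝ => |(⌊a k + t⌋ : ℝ) - ⌊b k + t⌋|)
      MeasureTheory.volume 0 1 ∧
      ∫ t in (0 : ℝ)..1, |(⌊a k + t⌋ : ℝ) - ⌊b k + t⌋| = |a k - b k| := by
    intro k
    have ha := integral_floor_add (a k)
    have hb := integral_floor_add (b k)
    refine ⟨(ha.1.sub hb.1).abs, ?_⟩
    rcases le_total (b k) (a k) with h | h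
    · have h1 : ∀ t : ℝ, |(⌊a k + t⌋ : ℝ) - ⌊b k + t⌋| = (⌊a k + t⌋ : ℝ) - ⌊b k + t⌋ := by
        intro t
        apply abs_of_nonneg
        rw [sub_nonneg]
        exact_mod_cast Int.floor_le_floor (by linarith)
      simp only [h1]
      rw [intervalIntegral.integral_sub ha.1 hb.1, ha.2, hb.2, abs_of_nonneg (by linarith)]
      ring
    · have h1 : ∀ t : ℝ, |(⌊a k + t⌋ : ℝ) - ⌊b k + t⌋| = (⌊b k + t⌋ : ℝ) - ⌊a k + t⌋ := by
        intro t
        rw [abs_sub_comm]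
        apply abs_of_nonneg
        rw [sub_nonneg]
        exact_mod_cast Int.floor_le_floor (by linarith)
      simp only [h1]
      rw [intervalIntegral.integral_sub hb.1 ha.1, ha.2, hb.2, abs_of_nonpos (by linarith)]
      ring
  by_contra! hcon
  have hI : IntervalIntegrable (fun t : ℝ => ∑ k ∈ s, |(⌊a k + t⌋ : ℝ) - ⌊b k + t⌋|)
      MeasureTheory.volume 0 1 := by
    have := IntervalIntegrable.sum s (fun k _ => (key k).1)
    simpa only [Finset.sum_fn] using this
  have h2 : ∫ t in (0 : ℝ)..1, ∑ k ∈ s, |(⌊a k + t⌋ : ℝ) - ⌊b k + t⌋| = ∑ k ∈ s, |a k - b k| := by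
    rw [intervalIntegral.integral_finsetSum (fun k _ => (key k).1)]
    exact Finset.sum_congr rfl fun k _ => (key k).2
  have h3 := intervalIntegral.intervalIntegral_pos_of_pos_on
    (f := fun t : ℝ => ∑ k ∈ s, |(⌊a k + t⌋ : ℝ) - ⌊b k + t⌋| - ∑ k ∈ s, |a k - b k|)
    (hI.sub (by simp)) (fun t _ => by have := hcon t; simpa using this) zero_lt_one
  rw [intervalIntegral.integral_sub hI (by simp), h2] at h3
  simp at h3

/-- **Mantel's theorem.** -/
lemma four_mul_card_edgeFinset_le_of_triangleFree {V : Type*} [Fintype V] (G : SimpleGraph V)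
    [DecidableRel G.Adj] (h : G.CliqueFree 3) : 4 * G.edgeFinset.card ≤ Fintype.card V ^ 2 := by
  have h1 := SimpleGraph.CliqueFree.card_edgeFinset_le (r := 2) h
  have h2 : (Fintype.card V % 2).choose 2 = 0 :=
    Nat.choose_eq_zero_of_lt (Nat.mod_lt _ two_pos)
  simp only [h2] at h1
  omega

open Relation in
/-- Chains labelled by `Λ` on a finite set `ι`: if every point lies on two crossing chains, crossing
chains meet at most once, and no three chains cross pairwise, then the number of chains, counted by
their upper ends, is at least `2 √|ι|`. -/
lemma four_mul_card_le_sq_card_tops {ι Λ : Type*} [Fintype ι] [Fintype Λ] [DecidableEq Λ]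
    (U : Λ → ι → ι → Prop) (S : ι → Finset Λ) (cr : Λ → Λ → Prop) (H : Λ → ι → ℝ)
    (hH : ∀ s i j, U s i j → H s i < H s j)
    (hinj : ∀ s i i' j, U s i j → U s i' j → i = i')
    (hS : ∀ s i j, U s i j → s ∈ S j)
    (hcr : ∀ i, ∃ s ∈ S i, ∃ t ∈ S i, cr s t)
    (hmeet : ∀ s t i j, cr s t → (ReflTransGen (U s) i j ∨ ReflTransGen (U s) j i) →
      (ReflTransGen (U t) i j ∨ ReflTransGen (U t) j i) → i = j)
    (hsymm : ∀ s t, cr s t → cr t s)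
    (htri : ∀ s t u, cr s t → cr t u → cr u s → False) :
    4 * Nat.card ι ≤ Nat.card {p : ι × Λ // p.2 ∈ S p.1 ∧ ¬ ∃ j, U p.2 p.1 j} ^ 2 := by
  classical
  have hirr : ∀ s, ¬ cr s s := fun s h => htri s s s h h h
  have htop : ∀ i s, s ∈ S i →
      ∃ p : {p : ι × Λ // p.2 ∈ S p.1 ∧ ¬ ∃ j, U p.2 p.1 j},
        p.1.2 = s ∧ ReflTransGen (U s) i p.1.1 := by
    intro i s hs
    obtain ⟨j, hj, hmax⟩ := Set.exists_max_image {j | ReflTransGen (U s) i j} (H s)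
      (Set.toFinite _) ⟨i, ReflTransGen.refl⟩
    refine ⟨⟨(j, s), ?_, ?_⟩, rfl, hj⟩
    · rcases ReflTransGen.cases_tail hj with h | ⟨c, -, h⟩
      · simpa [h] using hs
      · exact hS _ _ _ h
    · rintro ⟨k, hk⟩
      exact absurd (hmax k (ReflTransGen.tail hj hk)) (not_le.mpr (hH _ _ _ hk))
  choose s hs t ht hst using hcr
  choose p hp hpR using fun i => htop i (s i) (hs i)
  choose q hq hqR using fun i => htop i (t i) (ht i)
  have hback : ∀ s i i' j, ReflTransGen (U s) i j → ReflTransGen (U s) i' j →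
      ReflTransGen (U s) i i' ∨ ReflTransGen (U s) i' i := by
    intro s i i' j h h'
    rw [← reflTransGen_swap] at h h'
    rw [← reflTransGen_swap, ← reflTransGen_swap (r := U s)]
    exact (ReflTransGen.total_of_right_unique (r := Function.swap (U s))
      (fun _ _ _ h h' => hinj _ _ _ _ h h') h h').symm
  let G : SimpleGraph {p : ι × Λ // p.2 ∈ S p.1 ∧ ¬ ∃ j, U p.2 p.1 j} :=
    { Adj := fun a b => cr a.1.2 b.1.2
      symm := ⟨fun a b h => hsymm _ _ h⟩
      loopless := ⟨fun a h => hirr _ h⟩ }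
  have hG : G.CliqueFree 3 := by
    intro c hc
    rw [SimpleGraph.is3Clique_iff] at hc
    obtain ⟨a, b, c, hab, hac, hbc, -⟩ := hc
    exact htri _ _ _ hab hbc hac.symm
  have hM := four_mul_card_edgeFinset_le_of_triangleFree G hG
  have hcard : Nat.card ι ≤ G.edgeFinset.card := by
    rw [Nat.card_eq_fintype_card, ← Finset.card_univ]
    refine Finset.card_le_card_of_injOn (fun i => s(p i, q i)) ?_ ?_
    · intro i _
      simp only [Finset.mem_coe, SimpleGraph.mem_edgeFinset, SimpleGraph.mem_edgeSet]
      change cr (p i).1.2 (q i).1.2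
      rw [hp, hq]; exact hst i
    · intro i _ j _ hij
      simp only [Sym2.eq_iff] at hij
      rcases hij with ⟨h1, h2⟩ | ⟨h1, h2⟩
      · have e1 : s i = s j := by rw [← hp i, ← hp j, h1]
        have e2 : t i = t j := by rw [← hq i, ← hq j, h2]
        refine hmeet (s i) (t i) i j (hst i) (hback _ _ _ _ (hpR i) ?_) (hback _ _ _ _ (hqR i) ?_)
        · rw [e1, h1]; exact hpR j
        · rw [e2, h2]; exact hqR j
      · have e1 : s i = t j := by rw [← hp i, ← hq j, h1]
        have e2 : t i = s j := by rw [← hq i, ← hp j, h2]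
        refine hmeet (s i) (t i) i j (hst i) (hback _ _ _ _ (hpR i) ?_) (hback _ _ _ _ (hqR i) ?_)
        · rw [e1, h1]; exact hqR j
        · rw [e2, h2]; exact hpR j
  rw [Nat.card_eq_fintype_card (α := {p : ι × Λ // p.2 ∈ S p.1 ∧ ¬ ∃ j, U p.2 p.1 j})]
  omega
/-- Two sector labels of almost perpendicular lines, when the lines through the origin are divided
into `18` equal sectors. -/
def CrossLabels (a b : ZMod 18) : Prop := b - a = 8 ∨ b - a = 9 ∨ b - a = 10

lemma CrossLabels.symm {a b : ZMod 18} (h : CrossLabels a b) : CrossLabels b a := by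
  revert a b; unfold CrossLabels; decide

lemma CrossLabels.triangle_free {a b c : ZMod 18} (h : CrossLabels a b) (h' : CrossLabels b c)
    (h'' : CrossLabels c a) : False := by
  have e : (b - a) + (c - b) + (a - c) = 0 := by ring
  unfold CrossLabels at h h' h''
  generalize b - a = x at *
  generalize c - b = y at *
  generalize a - c = w at *
  rcases h with rfl | rfl | rfl <;> rcases h' with rfl | rfl | rfl <;>
    rcases h'' with rfl | rfl | rfl <;> revert e <;> decide

/-- A set of at most two pairwise opposite bonds carries two labels only if it is cut. -/
lemma two_mul_card_image_le {ι Λ : Type*} [DecidableEq ι] [DecidableEq Λ] (A : Finset ι) (s : ι → Λ)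
    (opp : ι → ι → Prop) [DecidableRel opp] (hA : A.card ≤ 2)
    (hopp : ∀ a ∈ A, ∀ b ∈ A, a ≠ b → opp a b) :
    2 * (A.image s).card ≤
      2 + ((A ×ˢ A).filter (fun p => p.1 ≠ p.2 ∧ opp p.1 p.2 ∧ s p.1 ≠ s p.2)).card := by
  by_cases h : (A.image s).card ≤ 1
  · omega
  push Not at h
  obtain ⟨x, hx, y, hy, hxy⟩ := Finset.one_lt_card.mp h
  obtain ⟨a, ha, rfl⟩ := Finset.mem_image.mp hx
  obtain ⟨b, hb, rfl⟩ := Finset.mem_image.mp hy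
  have hab : a ≠ b := fun e => hxy (by rw [e])
  have h2 : ({(a, b), (b, a)} : Finset (ι × ι)).card = 2 :=
    Finset.card_pair (by simp [hab])
  have h3 : ({(a, b), (b, a)} : Finset (ι × ι)) ⊆
      (A ×ˢ A).filter (fun p => p.1 ≠ p.2 ∧ opp p.1 p.2 ∧ s p.1 ≠ s p.2) := by
    intro p hp
    simp only [Finset.mem_insert, Finset.mem_singleton] at hp
    rcases hp with rfl | rfl
    · simp [ha, hb, hab, hxy, hopp a ha b hb hab]
    · simp [ha, hb, hab.symm, hxy.symm, hopp b hb a ha hab.symm]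
  have h4 := Finset.card_le_card h3
  have h5 : (A.image s).card ≤ A.card := Finset.card_image_le
  omega

/-- The labels at one point, completed to a set with two crossing labels. -/
lemma exists_label_set {ι : Type*} [DecidableEq ι] (nb : Finset ι) (s : ι → ZMod 18)
    (opp perp : ι → ι → Prop) [DecidableRel opp] (hsymm : ∀ a b, opp a b → opp b a)
    (hgood : ∀ a ∈ nb, ∀ b ∈ nb, a ≠ b → opp a b ∨ perp a b)
    (hcross : ∀ a ∈ nb, ∀ b ∈ nb, perp a b → CrossLabels (s a) (s b))
    (huniq : ∀ a ∈ nb, ∀ b ∈ nb, ∀ c ∈ nb, b ≠ c → opp a b → opp a c → False)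
    (hperp : ∀ a ∈ nb, ∀ b ∈ nb, ∀ c ∈ nb, b ≠ c → perp a b → perp a c → opp b c) :
    ∃ S : Finset (ZMod 18), (∀ a ∈ nb, s a ∈ S) ∧ (∃ a ∈ S, ∃ b ∈ S, CrossLabels a b) ∧
      2 * S.card ≤
        4 + ((nb ×ˢ nb).filter (fun p => p.1 ≠ p.2 ∧ opp p.1 p.2 ∧ s p.1 ≠ s p.2)).card := by
  rcases nb.eq_empty_or_nonempty with rfl | ⟨j, hj⟩
  · refine ⟨{0, 9}, by simp, ⟨0, by simp, 9, by simp, by unfold CrossLabels; decide⟩, ?_⟩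
    have : ({0, 9} : Finset (ZMod 18)).card = 2 := by decide
    omega
  set A := nb.filter (fun a => a = j ∨ opp j a) with hAdef
  set B := nb.filter (fun a => ¬ (a = j ∨ opp j a)) with hBdef
  have hAopp : ∀ a ∈ A, ∀ b ∈ A, ∀ c ∈ A, a ≠ b → a ≠ c → b ≠ c → False := by
    intro a ha b hb c hc hab hac hbc
    simp only [hAdef, Finset.mem_filter] at ha hb hc
    rcases ha with ⟨ha, rfl | ha'⟩
    · exact huniq a hj b hb.1 c hc.1 hbc (hb.2.resolve_left hab.symm) (hc.2.resolve_left hac.symm)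
    · rcases hb with ⟨hb, rfl | hb'⟩
      · exact huniq b hj a ha c hc.1 hac ha' (hc.2.resolve_left hbc.symm)
      · exact huniq j hj a ha b hb hab ha' hb'
  have hBperp : ∀ a ∈ B, a ∈ nb ∧ perp j a := by
    intro a ha
    simp only [hBdef, Finset.mem_filter, not_or] at ha
    exact ⟨ha.1, (hgood j hj a ha.1 (Ne.symm ha.2.1)).resolve_left ha.2.2⟩
  have hBopp : ∀ a ∈ B, ∀ b ∈ B, a ≠ b → opp a b := fun a ha b hb hab =>
    hperp j hj a (hBperp a ha).1 b (hBperp b hb).1 hab (hBperp a ha).2 (hBperp b hb).2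
  have hcard : ∀ C : Finset ι,
      (∀ a ∈ C, ∀ b ∈ C, ∀ c ∈ C, a ≠ b → a ≠ c → b ≠ c → False) → C.card ≤ 2 := by
    intro C hC
    by_contra! h
    obtain ⟨a, b, c, ha, hb, hc, hab, hac, hbc⟩ := Finset.two_lt_card_iff.mp h
    exact hC a ha b hb c hc hab hac hbc
  have hA2 := hcard A hAopp
  have hB2 := hcard B (fun a ha b hb c hc hab hac hbc => huniq a (hBperp a ha).1 b (hBperp b hb).1 c
    (hBperp c hc).1 hbc (hBopp a ha b hb hab) (hBopp a ha c hc hac))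
  have hAopp' : ∀ a ∈ A, ∀ b ∈ A, a ≠ b → opp a b := by
    intro a ha b hb hab
    simp only [hAdef, Finset.mem_filter] at ha hb
    rcases ha with ⟨ha, rfl | ha'⟩
    · exact hb.2.resolve_left hab.symm
    · rcases hb with ⟨hb, rfl | hb'⟩
      · exact hsymm _ _ ha'
      · exact (huniq j hj a ha b hb hab ha' hb').elim
  have hA := two_mul_card_image_le A s opp hA2 hAopp'
  have hB := two_mul_card_image_le B s opp hB2 hBopp
  have hAB : ((A ×ˢ A).filter (fun p => p.1 ≠ p.2 ∧ opp p.1 p.2 ∧ s p.1 ≠ s p.2)).card +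
      ((B ×ˢ B).filter (fun p => p.1 ≠ p.2 ∧ opp p.1 p.2 ∧ s p.1 ≠ s p.2)).card ≤
      ((nb ×ˢ nb).filter (fun p => p.1 ≠ p.2 ∧ opp p.1 p.2 ∧ s p.1 ≠ s p.2)).card := by
    rw [← Finset.card_union_of_disjoint]
    · refine Finset.card_le_card (Finset.union_subset ?_ ?_) <;>
        exact Finset.filter_subset_filter _
          (Finset.product_subset_product (Finset.filter_subset _ _) (Finset.filter_subset _ _))
    · rw [Finset.disjoint_left]
      intro p hp hp'
      simp only [Finset.mem_filter, Finset.mem_product, hAdef, hBdef] at hp hp'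
      exact hp'.1.1.2 hp.1.1.2
  have hjA : s j ∈ A.image s := Finset.mem_image_of_mem _ (by simp [hAdef, hj])
  have hmem : ∀ a ∈ nb, a ∈ A ∨ a ∈ B := by
    intro a ha
    by_cases h : a = j ∨ opp j a
    · exact Or.inl (Finset.mem_filter.mpr ⟨ha, h⟩)
    · exact Or.inr (Finset.mem_filter.mpr ⟨ha, h⟩)
  rcases B.eq_empty_or_nonempty with hBe | ⟨k, hk⟩
  · refine ⟨A.image s ∪ {s j + 9}, ?_, ⟨s j, Finset.mem_union_left _ hjA, s j + 9, by simp,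
      Or.inr (Or.inl (by ring))⟩, ?_⟩
    · intro a ha
      rcases hmem a ha with h | h
      · exact Finset.mem_union_left _ (Finset.mem_image_of_mem _ h)
      · simp [hBe] at h
    · have h1 := Finset.card_union_le (A.image s) {s j + 9}
      simp only [Finset.card_singleton] at h1
      omega
  · refine ⟨A.image s ∪ B.image s, ?_, ⟨s j, Finset.mem_union_left _ hjA, s k,
      Finset.mem_union_right _ (Finset.mem_image_of_mem _ hk),
      hcross j hj k (hBperp k hk).1 (hBperp k hk).2⟩, ?_⟩
    · intro a ha
      rcases hmem a ha with h | h
      · exact Finset.mem_union_left _ (Finset.mem_image_of_mem _ h)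
      · exact Finset.mem_union_right _ (Finset.mem_image_of_mem _ h)
    · have h1 := Finset.card_union_le (A.image s) (B.image s)
      omega
/-- The unit vector in the middle of the sector with label `s`, for sectors rotated by `t`. -/
noncomputable def sectorAxis (t : ℝ) (s : ZMod 18) : ℂ :=
  Complex.exp (((π * ((s.val : ℝ) + 1 / 2 - t) / 18 : ℝ) : ℂ) * Complex.I)

/-- The coordinate of `v` along the axis of the sector `s`. -/
noncomputable def axisRe (t : ℝ) (s : ZMod 18) (v : ℂ) : ℝ :=
  ((starRingEnd ℂ) (sectorAxis t s) * v).re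

/-- The coordinate of `v` orthogonal to the axis of the sector `s`. -/
noncomputable def axisIm (t : ℝ) (s : ZMod 18) (v : ℂ) : ℝ :=
  ((starRingEnd ℂ) (sectorAxis t s) * v).im

lemma axis_polar (t : ℝ) (s : ZMod 18) (v : ℂ) :
    axisRe t s v = ‖v‖ * Real.cos (Complex.arg v - π * ((s.val : ℝ) + 1 / 2 - t) / 18) ∧
      axisIm t s v = ‖v‖ * Real.sin (Complex.arg v - π * ((s.val : ℝ) + 1 / 2 - t) / 18) := by
  set β : ℝ := π * ((s.val : ℝ) + 1 / 2 - t) / 18 with hβ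
  have h : (starRingEnd ℂ) (sectorAxis t s) * v =
      ‖v‖ * Complex.exp (((Complex.arg v - β : ℝ) : ℂ) * Complex.I) := by
    conv_lhs => rw [← Complex.norm_mul_exp_arg_mul_I v]
    rw [sectorAxis, ← Complex.exp_conj, mul_left_comm, ← Complex.exp_add, ← hβ]
    congr 2
    simp only [map_mul, Complex.conj_ofReal, Complex.conj_I]
    push_cast
    ring
  unfold axisRe axisIm
  rw [h, Complex.re_ofReal_mul, Complex.im_ofReal_mul, Complex.exp_ofReal_mul_I_re,
    Complex.exp_ofReal_mul_I_im]
  exact ⟨rfl, rfl⟩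

lemma sin_cos_of_abs_le {η : ℝ} (h : |η| ≤ π / 36) :
    0 < Real.cos η ∧ |Real.sin η| ≤ Real.cos η / 10 := by
  have hπ := Real.pi_lt_d2
  have h1 : |Real.sin η| ≤ |η| := Real.abs_sin_le_abs
  have h2 := Real.one_sub_sq_div_two_le_cos (x := η)
  have h3 : |η| ≤ 0.0876 := by linarith
  have h4 : η ^ 2 ≤ 0.0876 ^ 2 := by
    rw [← sq_abs]
    exact pow_le_pow_left₀ (abs_nonneg _) h3 2
  constructor
  · nlinarith
  · norm_num at *
    nlinarith

/-- A vector whose direction has the (oriented) sector number `q` lies in the double cone around the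
axis of its sector, and the parity of the half turn decides in which half. -/
lemma axis_of_sector (t : ℝ) (v : ℂ) (hv : v ≠ 0) (q : ℤ)
    (hq : q = ⌊Complex.arg v * 18 / π + t⌋) :
    ∃ m : ℤ, q = ((q : ZMod 18).val : ℤ) + 18 * m ∧
      |axisIm t (q : ZMod 18) v| ≤ |axisRe t (q : ZMod 18) v| / 10 ∧
      (Even m → 0 < axisRe t (q : ZMod 18) v) ∧ (Odd m → axisRe t (q : ZMod 18) v < 0) := by
  have hval : (((q : ZMod 18).val : ℕ) : ℤ) = q % 18 := by
    rw [ZMod.val_intCast]; rfl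
  refine ⟨q / 18, by rw [hval]; omega, ?_⟩
  set s : ZMod 18 := (q : ZMod 18)
  set m : ℤ := q / 18
  have hqm : (q : ℝ) = (s.val : ℝ) + 18 * m := by
    have : q = ((s.val : ℕ) : ℤ) + 18 * m := by rw [hval]; omega
    exact_mod_cast this
  have hπ := Real.pi_pos
  obtain ⟨hre, him⟩ := axis_polar t s v
  obtain ⟨η, hη⟩ : ∃ η, η = Complex.arg v - π * ((s.val : ℝ) + 1 / 2 - t) / 18 - m * π := ⟨_, rfl⟩
  have hη' : Complex.arg v - π * ((s.val : ℝ) + 1 / 2 - t) / 18 = η + m * π := by rw [hη]; ring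
  have h1 := Int.floor_le (Complex.arg v * 18 / π + t)
  have h2 := Int.lt_floor_add_one (Complex.arg v * 18 / π + t)
  rw [← hq, hqm] at h1 h2
  obtain ⟨a, ha⟩ : ∃ a, a = Complex.arg v * 18 / π := ⟨_, rfl⟩
  have ha' : Complex.arg v = a * π / 18 := by rw [ha]; field_simp
  rw [← ha] at h1 h2
  have hηa : η = (a + t - s.val - 18 * m - 1 / 2) * (π / 18) := by rw [hη, ha']; ring
  have habs : |η| ≤ π / 36 := by
    rw [hηa, abs_mul, abs_of_pos (by positivity : (0 : ℝ) < π / 18)]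
    have : |a + t - s.val - 18 * m - 1 / 2| ≤ 1 / 2 := by
      rw [abs_le]; constructor <;> linarith
    nlinarith
  obtain ⟨hc, hs⟩ := sin_cos_of_abs_le habs
  have hvn : 0 < ‖v‖ := norm_pos_iff.mpr hv
  rw [hre, him, hη', Real.cos_add_int_mul_pi, Real.sin_add_int_mul_pi]
  refine ⟨?_, ?_, ?_⟩
  · simp only [abs_mul, abs_zpow, abs_neg, abs_one, one_zpow, one_mul, abs_of_pos hc,
      abs_of_pos hvn]
    rw [mul_div_assoc]
    gcongr
  · intro he
    rw [he.neg_one_zpow]; positivity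
  · intro ho
    rw [ho.neg_one_zpow]
    nlinarith [mul_pos hvn hc]

/-- The double cones of crossing sectors meet only in the origin. -/
lemma eq_zero_of_mem_crossing_cones (t : ℝ) {a b : ZMod 18} (hab : CrossLabels a b) (v : ℂ)
    (ha : |axisIm t a v| ≤ |axisRe t a v| / 10) (hb : |axisIm t b v| ≤ |axisRe t b v| / 10) :
    v = 0 := by
  have hd : ∃ k : ℤ, (k = 8 ∨ k = 9 ∨ k = 10 ∨ k = -8 ∨ k = -9 ∨ k = -10) ∧
      ((b.val : ℤ) - a.val = k) := by
    refine ⟨_, ?_, rfl⟩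
    clear ha hb
    revert a b; unfold CrossLabels; decide
  obtain ⟨k, hk, hkv⟩ := hd
  obtain ⟨are, aim⟩ := axis_polar t a v
  obtain ⟨bre, bim⟩ := axis_polar t b v
  set x := Complex.arg v - π * ((a.val : ℝ) + 1 / 2 - t) / 18 with hx
  have hb' : Complex.arg v - π * ((b.val : ℝ) + 1 / 2 - t) / 18 = x - k * π / 18 := by
    have : (b.val : ℝ) = a.val + k := by rw [← hkv]; push_cast; ring
    rw [this, hx]; ring
  rw [hb'] at bre bim
  rw [Real.cos_sub] at bre
  rw [Real.sin_sub] at bim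
  set C := Real.cos (k * π / 18)
  set S := Real.sin (k * π / 18)
  have hCS : S ^ 2 + C ^ 2 = 1 := Real.sin_sq_add_cos_sq _
  have hC : |C| ≤ 1 / 5 := by
    have hπ := Real.pi_lt_d2
    have hp := Real.pi_pos
    have hs : |Real.sin (π / 18)| ≤ 1 / 5 :=
      Real.abs_sin_le_abs.trans (by rw [abs_of_pos (by positivity)]; linarith)
    have e8 : Real.cos (8 * π / 18) = Real.sin (π / 18) := by
      rw [← Real.cos_pi_div_two_sub]; congr 1; ring
    have e10 : Real.cos (10 * π / 18) = - Real.sin (π / 18) := by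
      rw [← Real.sin_neg, ← Real.cos_pi_div_two_sub]; congr 1; ring
    have e9 : Real.cos (9 * π / 18) = 0 := by
      rw [← Real.cos_pi_div_two]; congr 1; ring
    have hev : ∀ r : ℝ, Real.cos (-r * π / 18) = Real.cos (r * π / 18) := by
      intro r; rw [← Real.cos_neg]; congr 1; ring
    rcases hk with rfl | rfl | rfl | rfl | rfl | rfl <;> simp only [C] <;> push_cast <;>
      (try rw [hev]) <;> simp [e8, e9, e10, -one_div] <;> linarith
  have hbre : axisRe t b v = C * axisRe t a v + S * axisIm t a v := by rw [bre, are, aim]; ring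
  have hbim : axisIm t b v = C * axisIm t a v - S * axisRe t a v := by rw [bim, are, aim]; ring
  rw [hbre, hbim] at hb
  set X := axisRe t a v
  set Y := axisIm t a v
  have hS : 9 / 10 ≤ |S| := by
    have : C ^ 2 ≤ (1 / 5) ^ 2 := by rw [← sq_abs]; exact pow_le_pow_left₀ (abs_nonneg _) hC 2
    have h2 : (9 / 10 : ℝ) ^ 2 ≤ |S| ^ 2 := by rw [sq_abs]; linarith
    exact le_of_sq_le_sq h2 (abs_nonneg _)
  have hS1 : |S| ≤ 1 := Real.abs_sin_le_one _
  have h1 : |S| * |X| - |C| * |Y| ≤ |C * Y - S * X| := by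
    rw [← abs_mul, ← abs_mul, abs_sub_comm (C * Y)]; exact abs_sub_abs_le_abs_sub _ _
  have h2 : |C * X + S * Y| ≤ |C| * |X| + |S| * |Y| := by
    rw [← abs_mul, ← abs_mul]; exact abs_add_le _ _
  have hX0 := abs_nonneg X
  have hY0 := abs_nonneg Y
  have hX : |X| = 0 := by
    nlinarith [mul_le_mul_of_nonneg_right hC hX0, mul_le_mul_of_nonneg_right hC hY0,
      mul_le_mul_of_nonneg_right hS hX0, mul_le_mul_of_nonneg_right hS1 hY0]
  have hY : |Y| = 0 := by linarith
  rw [abs_eq_zero] at hX hY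
  have hsq : ‖v‖ ^ 2 = 0 := by
    have := Real.sin_sq_add_cos_sq x
    calc ‖v‖ ^ 2 = (‖v‖ * Real.sin x) ^ 2 + (‖v‖ * Real.cos x) ^ 2 := by
          linear_combination -‖v‖ ^ 2 * this
      _ = 0 := by rw [← are, ← aim, hX, hY]; ring
  simpa using hsq
/-- The direction of `v`, in units of the sector width `π / 18`. -/
noncomputable def dir (v : ℂ) : ℝ := Complex.arg v * 18 / π

lemma dir_neg {v : ℂ} (hv : v ≠ 0) : ∃ m : ℤ, dir (-v) = dir v + 18 + 36 * m := by
  have h := Complex.arg_neg_coe_angle hv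
  rw [← Real.Angle.coe_add, Real.Angle.angle_eq_iff_two_pi_dvd_sub] at h
  obtain ⟨m, hm⟩ := h
  refine ⟨m, ?_⟩
  have hπ := Real.pi_ne_zero
  have : Complex.arg (-v) = Complex.arg v + π + 2 * π * m := by linarith
  unfold dir
  rw [this]
  field_simp
  ring

/-- Floors of two numbers differing by almost `c` differ by `c` up to one. -/
lemma abs_floor_sub_floor_sub_le {a b t : ℝ} {c : ℤ} (h : |a - b - c| ≤ 1 / 10) :
    |⌊a + t⌋ - ⌊b + t⌋ - c| ≤ 1 := by
  have h1 := Int.floor_le (a + t)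
  have h2 := Int.lt_floor_add_one (a + t)
  have h3 := Int.floor_le (b + t)
  have h4 := Int.lt_floor_add_one (b + t)
  rw [abs_le] at h
  have h5 : ((⌊a + t⌋ - ⌊b + t⌋ - c : ℤ) : ℝ) < ((2 : ℤ) : ℝ) := by push_cast; linarith
  have h6 : ((-2 : ℤ) : ℝ) < ((⌊a + t⌋ - ⌊b + t⌋ - c : ℤ) : ℝ) := by push_cast; linarith
  have h7 := Int.cast_lt.mp h5
  have h8 := Int.cast_lt.mp h6
  rw [abs_le]; constructor <;> omega

lemma eq_zero_of_abs_cast_lt_one {c : ℤ} (h : |(c : ℝ)| < 1) : c = 0 := by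
  rw [← Int.cast_abs] at h
  exact Int.abs_lt_one_iff.mp (by exact_mod_cast h)

lemma crossLabels_floor {a b t : ℝ} {m : ℤ} (h : |a - b - (9 + 18 * m)| ≤ 1 / 10) :
    CrossLabels ((⌊a + t⌋ : ℤ) : ZMod 18) ((⌊b + t⌋ : ℤ) : ZMod 18) := by
  have h1 : |⌊a + t⌋ - ⌊b + t⌋ - (9 + 18 * m)| ≤ 1 := by
    apply abs_floor_sub_floor_sub_le; push_cast; exact h
  rw [abs_le] at h1
  have h2 : ⌊a + t⌋ - ⌊b + t⌋ = 18 * m + 8 ∨ ⌊a + t⌋ - ⌊b + t⌋ = 18 * m + 9 ∨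
      ⌊a + t⌋ - ⌊b + t⌋ = 18 * m + 10 := by omega
  have h18 : (18 : ZMod 18) = 0 := by decide
  have key : ∀ c : ℤ, ⌊a + t⌋ - ⌊b + t⌋ = 18 * m + c →
      ((⌊a + t⌋ : ℤ) : ZMod 18) - ((⌊b + t⌋ : ℤ) : ZMod 18) = c := by
    intro c hc
    rw [← Int.cast_sub, hc]; push_cast; rw [h18]; ring
  apply CrossLabels.symm
  unfold CrossLabels
  rcases h2 with h2 | h2 | h2
  · exact Or.inl (by simpa using key _ h2)
  · exact Or.inr (Or.inl (by simpa using key _ h2))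
  · exact Or.inr (Or.inr (by simpa using key _ h2))

open Relation in
/-- The number of oriented bonds of a finite planar graph all of whose angles are almost multiples
of `π / 2`, in terms of the total bending `dd` of the almost straight angles. -/
theorem bond_count_le {ι : Type*} [Fintype ι] (z : ι → ℂ) (hz : Function.Injective z)
    (Adj : ι → ι → Prop) [DecidableRel Adj] [DecidableEq ι]
    (hsymm : ∀ i j, Adj i j → Adj j i) (hirr : ∀ i, ¬ Adj i i)
    (dd : ι → ι → ι → ℝ) (hdd : ∀ i j k, Adj i j → Adj i k → j ≠ k → 0 ≤ dd i j k)
    (hgood : ∀ i j k, Adj i j → Adj i k → j ≠ k →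
      (∃ m : ℤ, |dir (z j - z i) - dir (z k - z i) - (18 + 36 * m)| ≤ 1 / 10 ∧
        |dir (z j - z i) - dir (z k - z i) - (18 + 36 * m)| ≤ dd i j k) ∨
      ∃ m : ℤ, |dir (z j - z i) - dir (z k - z i) - (9 + 18 * m)| ≤ 1 / 10) :
    ∑ i, ∑ j, (if Adj i j then (1 : ℝ) else 0) ≤
      4 * Fintype.card ι - 2 * (⌈2 * Real.sqrt (Fintype.card ι)⌉ : ℤ) +
        ∑ i, ∑ j, ∑ k, (if Adj i j ∧ Adj i k ∧ j ≠ k then dd i j k else 0) := by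
  classical
  obtain ⟨α, hα⟩ : ∃ α : ι → ι → ℝ, ∀ i j, α i j = dir (z j - z i) := ⟨_, fun _ _ => rfl⟩
  simp only [← hα] at hgood
  obtain ⟨opp, hopp⟩ : ∃ opp : ι → ι → ι → Prop, ∀ i j k, opp i j k ↔
    ∃ m : ℤ, |α i j - α i k - (18 + 36 * m)| ≤ 1 / 10 := ⟨_, fun _ _ _ => Iff.rfl⟩
  obtain ⟨perp, hperp⟩ : ∃ perp : ι → ι → ι → Prop, ∀ i j k, perp i j k ↔
    ∃ m : ℤ, |α i j - α i k - (9 + 18 * m)| ≤ 1 / 10 := ⟨_, fun _ _ _ => Iff.rfl⟩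
  have hop : ∀ i j k, Adj i j → Adj i k → j ≠ k → opp i j k ∨ perp i j k := by
    intro i j k hj hk hjk
    rcases hgood i j k hj hk hjk with ⟨m, hm, -⟩ | h
    · exact Or.inl ((hopp _ _ _).mpr ⟨m, hm⟩)
    · exact Or.inr ((hperp _ _ _).mpr h)
  have hopp_symm : ∀ i j k, opp i j k → opp i k j := by
    intro i j k h
    rw [hopp] at h ⊢
    obtain ⟨m, hm⟩ := h
    refine ⟨-m - 1, ?_⟩
    rw [← abs_neg] at hm
    convert hm using 2; push_cast; ring
  have huniq : ∀ i a b c, Adj i a → Adj i b → Adj i c → b ≠ c → opp i a b → opp i a c → False := by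
    intro i a b c ha hb hc hbc h1 h2
    rw [hopp] at h1 h2
    obtain ⟨m, hm⟩ := h1
    obtain ⟨m', hm'⟩ := h2
    rcases hop i b c hb hc hbc with h | h
    · rw [hopp] at h
      obtain ⟨l, hl⟩ := h
      have := eq_zero_of_abs_cast_lt_one (c := 36 * m' - 36 * m - (18 + 36 * l)) (by
        push_cast; rw [abs_lt]; rw [abs_le] at hm hm' hl; constructor <;> linarith)
      omega
    · rw [hperp] at h
      obtain ⟨l, hl⟩ := h
      have := eq_zero_of_abs_cast_lt_one (c := 36 * m' - 36 * m - (9 + 18 * l)) (by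
        push_cast; rw [abs_lt]; rw [abs_le] at hm hm' hl; constructor <;> linarith)
      omega
  have hpp : ∀ i a b c, Adj i a → Adj i b → Adj i c → b ≠ c → perp i a b → perp i a c →
      opp i b c := by
    intro i a b c ha hb hc hbc h1 h2
    refine (hop i b c hb hc hbc).resolve_right fun h => ?_
    rw [hperp] at h1 h2 h
    obtain ⟨m, hm⟩ := h1
    obtain ⟨m', hm'⟩ := h2
    obtain ⟨l, hl⟩ := h
    have := eq_zero_of_abs_cast_lt_one (c := 18 * m' - 18 * m - (9 + 18 * l)) (by
      push_cast; rw [abs_lt]; rw [abs_le] at hm hm' hl; constructor <;> linarith)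
    omega
  -- choice of the sectors
  have hm : ∃ m : ι × ι × ι → ℤ, ∀ p : ι × ι × ι, Adj p.1 p.2.1 → Adj p.1 p.2.2 → p.2.1 ≠ p.2.2 →
      opp p.1 p.2.1 p.2.2 →
      |α p.1 p.2.1 - α p.1 p.2.2 - (18 + 36 * m p)| ≤ dd p.1 p.2.1 p.2.2 := by
    have : ∀ p : ι × ι × ι, ∃ m : ℤ, Adj p.1 p.2.1 → Adj p.1 p.2.2 → p.2.1 ≠ p.2.2 →
        opp p.1 p.2.1 p.2.2 →
        |α p.1 p.2.1 - α p.1 p.2.2 - (18 + 36 * m)| ≤ dd p.1 p.2.1 p.2.2 := by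
      rintro ⟨i, j, k⟩
      by_cases h : Adj i j ∧ Adj i k ∧ j ≠ k ∧ opp i j k
      · obtain ⟨hj, hk, hjk, ho⟩ := h
        rcases hgood i j k hj hk hjk with ⟨m, -, hm⟩ | ⟨l, hl⟩
        · exact ⟨m, fun _ _ _ _ => hm⟩
        · exfalso
          rw [hopp] at ho
          obtain ⟨m, hm⟩ := ho
          have := eq_zero_of_abs_cast_lt_one (c := 18 + 36 * m - (9 + 18 * l)) (by
            push_cast; rw [abs_lt]; rw [abs_le] at hm hl; constructor <;> linarith)
          omega
      · exact ⟨0, fun h1 h2 h3 h4 => (h ⟨h1, h2, h3, h4⟩).elim⟩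
    choose m hm using this
    exact ⟨m, hm⟩
  obtain ⟨m, hm⟩ := hm
  obtain ⟨t, ht⟩ := exists_shift_sum_floor_sub_le
    (Finset.univ.filter fun p : ι × ι × ι => Adj p.1 p.2.1 ∧ Adj p.1 p.2.2 ∧ p.2.1 ≠ p.2.2 ∧
      opp p.1 p.2.1 p.2.2)
    (fun p => α p.1 p.2.1 - (18 + 36 * m p)) (fun p => α p.1 p.2.2)
  obtain ⟨lab, hlab⟩ : ∃ lab : ι → ι → ZMod 18, ∀ i j, lab i j = ((⌊α i j + t⌋ : ℤ) : ZMod 18) :=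
    ⟨_, fun _ _ => rfl⟩
  set cuts : ι → Finset (ι × ι) := fun i =>
    (Finset.univ.filter (Adj i) ×ˢ Finset.univ.filter (Adj i)).filter
      (fun p => p.1 ≠ p.2 ∧ opp i p.1 p.2 ∧ lab i p.1 ≠ lab i p.2) with hcuts
  have hcutsum : ((∑ i, (cuts i).card : ℕ) : ℝ) ≤
      ∑ i, ∑ j, ∑ k, (if Adj i j ∧ Adj i k ∧ j ≠ k then dd i j k else 0) := by
    have e1 : ((∑ i, (cuts i).card : ℕ) : ℝ) = ∑ i, ∑ j, ∑ k,
        (if Adj i j ∧ Adj i k ∧ j ≠ k ∧ opp i j k ∧ lab i j ≠ lab i k then (1 : ℝ) else 0) := by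
      rw [Nat.cast_sum]
      refine Finset.sum_congr rfl fun i _ => ?_
      rw [← Fintype.sum_prod_type' (f := fun j k => if Adj i j ∧ Adj i k ∧ j ≠ k ∧ opp i j k ∧
        lab i j ≠ lab i k then (1 : ℝ) else 0), Finset.sum_boole]
      congr 2
      ext p
      simp [hcuts, and_assoc]
    rw [Finset.sum_filter, Finset.sum_filter, Fintype.sum_prod_type, Fintype.sum_prod_type] at ht
    simp only [Fintype.sum_prod_type] at ht
    rw [e1]
    refine le_trans ?_ (ht.trans ?_)
    · refine Finset.sum_le_sum fun i _ => Finset.sum_le_sum fun j _ => Finset.sum_le_sum fun k _ => ?_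
      by_cases h : Adj i j ∧ Adj i k ∧ j ≠ k ∧ opp i j k
      · rw [if_pos h]
        by_cases hl : lab i j = lab i k
        · simp [hl]
        · rw [if_pos ⟨h.1, h.2.1, h.2.2.1, h.2.2.2, hl⟩]
          have e : α i j - (18 + 36 * m (i, j, k)) + t =
              α i j + t - ((18 + 36 * m (i, j, k) : ℤ) : ℝ) := by push_cast; ring
          rw [e, Int.floor_sub_intCast, ← Int.cast_sub, ← Int.cast_abs]
          have : 1 ≤ |⌊α i j + t⌋ - (18 + 36 * m (i, j, k)) - ⌊α i k + t⌋| := by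
            refine Int.one_le_abs fun h0 => hl ?_
            have h18 : (18 : ZMod 18) = 0 := by decide
            have h36 : (36 : ZMod 18) = 0 := by decide
            have : ⌊α i j + t⌋ = ⌊α i k + t⌋ + (18 + 36 * m (i, j, k)) := by omega
            rw [hlab, hlab, this]
            push_cast
            rw [h18, h36]; ring
          exact_mod_cast this
      · rw [if_neg h, if_neg fun h' => h ⟨h'.1, h'.2.1, h'.2.2.1, h'.2.2.2.1⟩]
    · refine Finset.sum_le_sum fun i _ => Finset.sum_le_sum fun j _ => Finset.sum_le_sum fun k _ => ?_
      by_cases h : Adj i j ∧ Adj i k ∧ j ≠ k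
      · rw [if_pos h]
        split_ifs with h'
        · refine le_trans (le_of_eq ?_) (hm (i, j, k) h.1 h.2.1 h.2.2 h'.2.2.2)
          congr 1; ring
        · exact hdd i j k h.1 h.2.1 h.2.2
      · rw [if_neg h, if_neg fun h' => h ⟨h'.1, h'.2.1, h'.2.2.1⟩]
  have hS : ∀ i, ∃ S : Finset (ZMod 18), (∀ a ∈ Finset.univ.filter (Adj i), lab i a ∈ S) ∧
      (∃ a ∈ S, ∃ b ∈ S, CrossLabels a b) ∧ 2 * S.card ≤ 4 + (cuts i).card := by
    intro i
    refine exists_label_set (Finset.univ.filter (Adj i)) (lab i) (opp i) (perp i)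
      (hopp_symm i) ?_ ?_ ?_ ?_
    · intro a ha b hb hab
      exact hop i a b (by simpa using ha) (by simpa using hb) hab
    · intro a ha b hb hab
      obtain ⟨m, hm⟩ := (hperp _ _ _).mp hab
      rw [hlab, hlab]
      exact crossLabels_floor hm
    · intro a ha b hb c hc
      exact huniq i a b c (by simpa using ha) (by simpa using hb) (by simpa using hc)
    · intro a ha b hb c hc
      exact hpp i a b c (by simpa using ha) (by simpa using hb) (by simpa using hc)
  choose S hSlab hScr hScard using hS
  replace hSlab : ∀ i j, Adj i j → lab i j ∈ S i := fun i j h => hSlab i j (by simpa using h)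
  have hne : ∀ i j, Adj i j → z j - z i ≠ 0 := fun i j h e => by
    rw [sub_eq_zero] at e
    have := hz e
    subst this
    exact hirr _ h
  have hlab_symm : ∀ i j, Adj i j → lab j i = lab i j := by
    intro i j h
    obtain ⟨l, hl⟩ := dir_neg (hne i j h)
    rw [neg_sub, ← hα, ← hα] at hl
    have e : α j i + t = α i j + t + ((18 + 36 * l : ℤ) : ℝ) := by rw [hl]; push_cast; ring
    have h18 : (18 : ZMod 18) = 0 := by decide
    have h36 : (36 : ZMod 18) = 0 := by decide
    rw [hlab, hlab, e, Int.floor_add_intCast]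
    push_cast
    rw [h18, h36]; ring
  have hcone : ∀ i j, Adj i j →
      |axisIm t (lab i j) (z j - z i)| ≤ |axisRe t (lab i j) (z j - z i)| / 10 ∧
      axisRe t (lab i j) (z j - z i) ≠ 0 := by
    intro i j h
    obtain ⟨l, -, h1, h2, h3⟩ := axis_of_sector t (z j - z i) (hne i j h) ⌊α i j + t⌋
      (by rw [hα]; rfl)
    rw [← hlab] at h1 h2 h3
    refine ⟨h1, ?_⟩
    rcases Int.even_or_odd l with he | ho
    · exact (h2 he).ne'
    · exact (h3 ho).ne
  -- two bonds at a point with the same label point to opposite sides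
  have hsign : ∀ i j k, Adj i j → Adj i k → j ≠ k → lab i j = lab i k →
      axisRe t (lab i j) (z j - z i) * axisRe t (lab i j) (z k - z i) < 0 := by
    intro i j k hj hk hjk hl
    obtain ⟨a, ha, -, ha2, ha3⟩ := axis_of_sector t (z j - z i) (hne i j hj) ⌊α i j + t⌋
      (by rw [hα]; rfl)
    obtain ⟨b, hb, -, hb2, hb3⟩ := axis_of_sector t (z k - z i) (hne i k hk) ⌊α i k + t⌋
      (by rw [hα]; rfl)
    rw [← hlab] at ha ha2 ha3 hb hb2 hb3
    rw [← hl] at hb hb2 hb3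
    rcases hop i j k hj hk hjk with h | h
    · obtain ⟨l, hl⟩ := (hopp _ _ _).mp h
      have h1 : |⌊α i j + t⌋ - ⌊α i k + t⌋ - (18 + 36 * l)| ≤ 1 := by
        apply abs_floor_sub_floor_sub_le; push_cast; exact hl
      rw [abs_le] at h1
      have h2 : a = b + 1 + 2 * l := by omega
      rcases Int.even_or_odd b with he | ho
      · have : Odd a := by rw [h2]; grind
        exact mul_neg_of_neg_of_pos (ha3 this) (hb2 he)
      · have : Even a := by rw [h2]; grind
        exact mul_neg_of_pos_of_neg (ha2 this) (hb3 ho)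
    · exfalso
      obtain ⟨l, hl'⟩ := (hperp _ _ _).mp h
      have h1 := crossLabels_floor (t := t) hl'
      rw [← hlab, ← hlab, hl] at h1
      unfold CrossLabels at h1
      rw [sub_self] at h1
      revert h1; decide
  have hRe_sub : ∀ s u v, axisRe t s (u - v) = axisRe t s u - axisRe t s v := by
    intro s u v; simp only [axisRe, mul_sub, Complex.sub_re]
  have hIm_sub : ∀ s u v, axisIm t s (u - v) = axisIm t s u - axisIm t s v := by
    intro s u v; simp only [axisIm, mul_sub, Complex.sub_im]
  set U : ZMod 18 → ι → ι → Prop := fun s i j =>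
    Adj i j ∧ lab i j = s ∧ axisRe t s (z i) < axisRe t s (z j) with hU
  have hUS : ∀ s i j, U s i j → s ∈ S j := by
    rintro s i j ⟨h, rfl, -⟩
    rw [← hlab_symm i j h]
    exact hSlab j i (hsymm _ _ h)
  have hinj : ∀ s i i' j, U s i j → U s i' j → i = i' := by
    rintro s i i' j ⟨h1, h2, h3⟩ ⟨h1', h2', h3'⟩
    by_contra hne
    have h4 := hlab_symm i j h1
    have h4' := hlab_symm i' j h1'
    have h5 := hsign j i i' (hsymm _ _ h1) (hsymm _ _ h1') hne (by rw [h4, h4', h2, h2'])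
    rw [h4, h2, hRe_sub, hRe_sub] at h5
    nlinarith
  have hfun : ∀ s i j j', U s i j → U s i j' → j = j' := by
    rintro s i j j' ⟨h1, h2, h3⟩ ⟨h1', h2', h3'⟩
    by_contra hne
    have h5 := hsign i j j' h1 h1' hne (by rw [h2, h2'])
    rw [h2, hRe_sub, hRe_sub] at h5
    nlinarith
  have hreach : ∀ s i j, ReflTransGen (U s) i j →
      |axisIm t s (z j - z i)| ≤ axisRe t s (z j - z i) / 10 := by
    intro s i j h
    induction h with
    | refl => simp [axisIm, axisRe]
    | tail _ hbc ih =>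
      rename_i b c _
      obtain ⟨h1, h2, h3⟩ := hbc
      have h4 := (hcone b c h1).1
      rw [h2] at h4
      have h5 : 0 < axisRe t s (z c - z b) := by rw [hRe_sub]; linarith
      rw [abs_of_pos h5] at h4
      rw [hRe_sub, hIm_sub] at *
      rw [abs_le] at *
      constructor <;> linarith
  have hreach' : ∀ s i j, (ReflTransGen (U s) i j ∨ ReflTransGen (U s) j i) →
      |axisIm t s (z j - z i)| ≤ |axisRe t s (z j - z i)| / 10 := by
    rintro s i j (h | h)
    · refine (hreach s i j h).trans ?_
      gcongr; exact le_abs_self _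
    · have := hreach s j i h
      have e : axisIm t s (z j - z i) = - axisIm t s (z i - z j) := by rw [hIm_sub, hIm_sub]; ring
      have e' : axisRe t s (z j - z i) = - axisRe t s (z i - z j) := by rw [hRe_sub, hRe_sub]; ring
      rw [e, e', abs_neg, abs_neg]
      refine this.trans ?_
      gcongr; exact le_abs_self _
  have hmantel := four_mul_card_le_sq_card_tops U S CrossLabels (fun s i => axisRe t s (z i))
    (fun s i j h => h.2.2) hinj hUS hScr
    (fun s t' i j hst h1 h2 => by
      have := eq_zero_of_mem_crossing_cones t hst (z j - z i) (hreach' s i j h1) (hreach' t' i j h2)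
      exact (hz (sub_eq_zero.mp this)).symm)
    (fun _ _ h => h.symm) (fun _ _ _ h h' h'' => h.triangle_free h' h'')
  set K := Nat.card {p : ι × ZMod 18 // p.2 ∈ S p.1 ∧ ¬ ∃ j, U p.2 p.1 j} with hK
  have hKceil : ⌈2 * Real.sqrt (Fintype.card ι)⌉ ≤ (K : ℤ) := by
    rw [Int.ceil_le]
    rw [Nat.card_eq_fintype_card] at hmantel
    have h1 : (4 : ℝ) * Fintype.card ι ≤ (K : ℝ) ^ 2 := by exact_mod_cast hmantel
    have h2 : 2 * Real.sqrt (Fintype.card ι) = Real.sqrt (4 * Fintype.card ι) := by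
      rw [Real.sqrt_mul (by norm_num), show (4 : ℝ) = 2 ^ 2 by norm_num, Real.sqrt_sq (by norm_num)]
    rw [h2]
    push_cast
    exact Real.sqrt_le_iff.mpr ⟨by positivity, h1⟩
  have hcount : ∑ i, ∑ j, (if Adj i j then (1 : ℝ) else 0) + 2 * K ≤ ((∑ i, 2 * (S i).card : ℕ) : ℝ) := by
    set up : Finset (ι × ι) := Finset.univ.filter fun p =>
      Adj p.1 p.2 ∧ axisRe t (lab p.1 p.2) (z p.1) < axisRe t (lab p.1 p.2) (z p.2) with hup
    have hadj : ∑ i, ∑ j, (if Adj i j then (1 : ℝ) else 0) ≤ 2 * (up.card : ℝ) := by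
      rw [← Fintype.sum_prod_type' (f := fun i j => if Adj i j then (1 : ℝ) else 0),
        Finset.sum_boole]
      have hsub : (Finset.univ.filter fun p : ι × ι => Adj p.1 p.2) ⊆ up ∪ up.image Prod.swap := by
        rintro ⟨i, j⟩ hij
        simp only [Finset.mem_filter, Finset.mem_univ, true_and] at hij
        have h1 := (hcone i j hij).2
        rw [hRe_sub] at h1
        rcases lt_or_gt_of_ne (fun e => h1 (sub_eq_zero.mpr e)) with h2 | h2
        · refine Finset.mem_union_right _ (Finset.mem_image.mpr ⟨(j, i), ?_, rfl⟩)
          simp [hup, hsymm _ _ hij, hlab_symm i j hij, h2]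
        · refine Finset.mem_union_left _ ?_
          simp [hup, hij, h2]
      have h1 := (Finset.card_le_card hsub).trans (Finset.card_union_le _ _)
      have h2 : (up.image Prod.swap).card ≤ up.card := Finset.card_image_le
      have h3 : (Finset.univ.filter fun p : ι × ι => Adj p.1 p.2).card ≤ 2 * up.card := by omega
      exact_mod_cast h3
    set nodes : Finset (ι × ZMod 18) := Finset.univ.filter fun p => p.2 ∈ S p.1 with hnodes
    have hnodes_card : nodes.card = ∑ i, (S i).card := by
      rw [hnodes, Finset.card_filter, Fintype.sum_prod_type]
      exact Finset.sum_congr rfl fun i _ => by simp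
    have hup_card : up.card ≤ (nodes.filter fun p => ∃ j, U p.2 p.1 j).card := by
      refine Finset.card_le_card_of_injOn (fun p => (p.1, lab p.1 p.2)) ?_ ?_
      · rintro ⟨i, j⟩ hij
        simp only [hup, Finset.coe_filter, Set.mem_ofPred_eq, Finset.mem_univ, true_and] at hij
        simp only [hnodes, Finset.coe_filter, Set.mem_ofPred_eq, Finset.mem_filter, Finset.mem_univ,
          true_and]
        exact ⟨hSlab i j hij.1, j, hij.1, rfl, hij.2⟩
      · rintro ⟨i, j⟩ hij ⟨i', j'⟩ hij' he
        simp only [hup, Finset.coe_filter, Set.mem_ofPred_eq, Finset.mem_univ, true_and] at hij hij'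
        obtain ⟨rfl, h2⟩ := Prod.mk.inj he
        simp only at h2
        have := hfun (lab i j) i j j' ⟨hij.1, rfl, hij.2⟩ ⟨hij'.1, h2.symm, by rw [h2]; exact hij'.2⟩
        rw [this]
    have hKc : K = (nodes.filter fun p => ¬ ∃ j, U p.2 p.1 j).card := by
      rw [hK, Nat.card_eq_fintype_card, Fintype.card_subtype, hnodes, Finset.filter_filter]
    have hsplit := Finset.card_filter_add_card_filter_not (s := nodes)
      (fun p => ∃ j, U p.2 p.1 j)
    have hfinal : 2 * up.card + 2 * K ≤ ∑ i, 2 * (S i).card := by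
      rw [← Finset.mul_sum, ← hnodes_card]; omega
    have hfinal' : 2 * (up.card : ℝ) + 2 * K ≤ ((∑ i, 2 * (S i).card : ℕ) : ℝ) := by
      exact_mod_cast hfinal
    linarith
  have hSsum : ((∑ i, 2 * (S i).card : ℕ) : ℝ) ≤
      4 * Fintype.card ι + ((∑ i, (cuts i).card : ℕ) : ℝ) := by
    have : ∑ i, 2 * (S i).card ≤ 4 * Fintype.card ι + ∑ i, (cuts i).card := by
      calc ∑ i, 2 * (S i).card ≤ ∑ i, (4 + (cuts i).card) := Finset.sum_le_sum fun i _ => hScard i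
        _ = _ := by simp [Finset.sum_add_distrib, mul_comm]
    exact_mod_cast this
  have hKr : ((⌈2 * Real.sqrt (Fintype.card ι)⌉ : ℤ) : ℝ) ≤ K := by exact_mod_cast hKceil
  linarith

lemma ceil_two_sqrt_add_lt {a b : ℕ} (ha : 1 ≤ a) (hb : 1 ≤ b) :
    ⌈2 * Real.sqrt ((a + b : ℕ) : ℝ)⌉ + 1 ≤ ⌈2 * Real.sqrt (a : ℝ)⌉ + ⌈2 * Real.sqrt (b : ℝ)⌉ := by
  have h1 : ⌈2 * Real.sqrt ((a + b : ℕ) : ℝ)⌉ ≤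
      ⌈2 * Real.sqrt (a : ℝ)⌉ + ⌈2 * Real.sqrt (b : ℝ)⌉ - 1 := by
    rw [Int.ceil_le]
    have ha' := Int.le_ceil (2 * Real.sqrt (a : ℝ))
    have hb' := Int.le_ceil (2 * Real.sqrt (b : ℝ))
    have hp : 1 ≤ Real.sqrt (a : ℝ) := Real.one_le_sqrt.mpr (by exact_mod_cast ha)
    have hq : 1 ≤ Real.sqrt (b : ℝ) := Real.one_le_sqrt.mpr (by exact_mod_cast hb)
    have h2 : Real.sqrt ((a + b : ℕ) : ℝ) ≤ Real.sqrt (a : ℝ) + Real.sqrt (b : ℝ) - 1 / 2 := by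
      rw [Real.sqrt_le_left (by linarith)]
      have e1 := Real.sq_sqrt (Nat.cast_nonneg (α := ℝ) a)
      have e2 := Real.sq_sqrt (Nat.cast_nonneg (α := ℝ) b)
      push_cast
      nlinarith
    rw [Int.cast_sub, Int.cast_add, Int.cast_one]
    linarith
  omega

/-- A graph with the maximal number of bonds whose angles are multiples of `π / 2` is connected. -/
lemma connected_of_bond_count {ι : Type*} [Fintype ι] (z : ι → ℂ) (hz : Function.Injective z)
    (Adj : ι → ι → Prop) [DecidableRel Adj]
    (hsymm : ∀ i j, Adj i j → Adj j i) (hirr : ∀ i, ¬ Adj i i)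
    (hgood : ∀ i j k, Adj i j → Adj i k → j ≠ k →
      (∃ m : ℤ, dir (z j - z i) - dir (z k - z i) = 18 + 36 * m) ∨
      ∃ m : ℤ, dir (z j - z i) - dir (z k - z i) = 9 + 18 * m)
    (hD : 4 * Fintype.card ι - 2 * (⌈2 * Real.sqrt (Fintype.card ι)⌉ : ℤ) ≤
      ∑ i, ∑ j, (if Adj i j then (1 : ℝ) else 0)) (i₀ j : ι) :
    Relation.ReflTransGen Adj i₀ j := by
  classical
  by_contra hj
  set p : ι → Prop := fun j => Relation.ReflTransGen Adj i₀ j with hp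
  have hsub : ∀ (q : ι → Prop) [DecidablePred q],
      ∑ i : {i // q i}, ∑ j : {i // q i}, (if Adj i j then (1 : ℝ) else 0) ≤
      4 * Fintype.card {i // q i} - 2 * (⌈2 * Real.sqrt (Fintype.card {i // q i})⌉ : ℤ) := by
    intro q _
    have := bond_count_le (ι := {i // q i}) (fun i => z i) (hz.comp Subtype.val_injective)
      (fun i j => Adj i j) (fun i j h => hsymm _ _ h) (fun i => hirr _) (fun _ _ _ => 0)
      (fun _ _ _ _ _ _ => le_rfl) (fun i j k h1 h2 h3 => by
        rcases hgood i j k h1 h2 (fun e => h3 (Subtype.ext e)) with ⟨m, hm⟩ | ⟨m, hm⟩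
        · left; refine ⟨m, ?_, ?_⟩ <;> rw [hm] <;> simp
        · right; refine ⟨m, ?_⟩; rw [hm]; simp)
    simpa using this
  have hcross : ∀ i j, p i → ¬ p j → ¬ Adj i j := fun i j hi hj h => hj (hi.tail h)
  have h1 := hsub p
  have h2 := hsub (fun i => ¬ p i)
  have hsplit : ∑ i, ∑ j, (if Adj i j then (1 : ℝ) else 0) =
      ∑ i : {i // p i}, ∑ j : {i // p i}, (if Adj i j then (1 : ℝ) else 0) +
      ∑ i : {i // ¬ p i}, ∑ j : {i // ¬ p i}, (if Adj i j then (1 : ℝ) else 0) := by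
    rw [← Fintype.sum_subtype_add_sum_subtype p]
    congr 1
    · refine Finset.sum_congr rfl fun i _ => ?_
      rw [← Fintype.sum_subtype_add_sum_subtype p, add_eq_left]
      exact Finset.sum_eq_zero fun j _ => if_neg (hcross i j i.2 j.2)
    · refine Finset.sum_congr rfl fun i _ => ?_
      rw [← Fintype.sum_subtype_add_sum_subtype p, add_eq_right]
      exact Finset.sum_eq_zero fun j _ => if_neg fun h => hcross j i j.2 i.2 (hsymm _ _ h)
  have hca : 1 ≤ Fintype.card {i // p i} :=
    Fintype.card_pos_iff.mpr ⟨⟨i₀, Relation.ReflTransGen.refl⟩⟩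
  have hcb : 1 ≤ Fintype.card {i // ¬ p i} := Fintype.card_pos_iff.mpr ⟨⟨j, hj⟩⟩
  have hc : Fintype.card ι = Fintype.card {i // p i} + Fintype.card {i // ¬ p i} := by
    rw [← Fintype.card_sum]; exact (Fintype.card_congr (Equiv.sumCompl p)).symm
  have hceil := ceil_two_sqrt_add_lt hca hcb
  rw [← hc] at hceil
  have hceil' : ((⌈2 * Real.sqrt (Fintype.card ι)⌉ : ℤ) : ℝ) + 1 ≤
    (⌈2 * Real.sqrt (Fintype.card {i // p i})⌉ : ℤ) +
      (⌈2 * Real.sqrt (Fintype.card {i // ¬ p i})⌉ : ℤ) := by exact_mod_cast hceil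
  have hc' : (Fintype.card ι : ℝ) = Fintype.card {i // p i} + Fintype.card {i // ¬ p i} := by
    exact_mod_cast hc
  linarith

lemma eq_zpow_mul_of_dir {v w : ℂ} (hv : ‖v‖ = 1) (hw : ‖w‖ = 1) {l : ℤ}
    (h : dir v - dir w = 9 * l) : v = Complex.I ^ l * w := by
  have hπ := Real.pi_ne_zero
  have h1 : Complex.arg v = Complex.arg w + l * (π / 2) := by
    unfold dir at h
    field_simp at h
    linarith
  rw [← Complex.norm_mul_exp_arg_mul_I v, ← Complex.norm_mul_exp_arg_mul_I w, hv, hw, h1]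
  have h2 : Complex.I = Complex.exp ((π / 2 : ℂ) * Complex.I) := by
    rw [Complex.exp_pi_div_two_mul_I]
  conv_rhs => rw [show Complex.I ^ l = Complex.exp ((π / 2 : ℂ) * Complex.I) ^ l by rw [← h2]]
  rw [← Complex.exp_int_mul]
  simp only [Complex.ofReal_one, one_mul]
  rw [← Complex.exp_add]
  congr 1
  push_cast
  ring

lemma exists_int_I_zpow (l : ℤ) : ∃ a b : ℤ, Complex.I ^ l = a + b * Complex.I := by
  have h4 : Complex.I ^ (4 : ℤ) = 1 := by exact_mod_cast Complex.I_pow_four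
  have h : Complex.I ^ l = Complex.I ^ (l % 4) := by
    conv_lhs => rw [← Int.emod_add_mul_ediv l 4]
    rw [zpow_add₀ Complex.I_ne_zero, zpow_mul, h4, one_zpow, mul_one]
  rw [h]
  have h5 : l % 4 = 0 ∨ l % 4 = 1 ∨ l % 4 = 2 ∨ l % 4 = 3 := by omega
  rcases h5 with h5 | h5 | h5 | h5 <;> rw [h5]
  · exact ⟨1, 0, by simp⟩
  · exact ⟨0, 1, by simp⟩
  · exact ⟨-1, 0, by
      have : Complex.I ^ (2 : ℤ) = -1 := by exact_mod_cast Complex.I_sq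
      simp [this]⟩
  · exact ⟨0, -1, by
      have : Complex.I ^ (3 : ℤ) = -Complex.I := by exact_mod_cast Complex.I_pow_three
      simp [this]⟩

/-- A connected graph with unit bonds and angles that are multiples of `π / 2` lies in a rotated and
translated copy of the Gaussian integers. -/
lemma exists_lattice_coordinates {ι : Type*} (z : ι → ℂ) (Adj : ι → ι → Prop)
    (hsymm : ∀ i j, Adj i j → Adj j i) (hunit : ∀ i j, Adj i j → ‖z j - z i‖ = 1)
    (hgood : ∀ i j k, Adj i j → Adj i k → j ≠ k →
      ∃ l : ℤ, dir (z j - z i) - dir (z k - z i) = 9 * l)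
    (i₀ : ι) (hconn : ∀ j, Relation.ReflTransGen Adj i₀ j) :
    ∃ u : ℂ, ‖u‖ = 1 ∧ ∀ j, ∃ a b : ℤ, z j - z i₀ = (a + b * Complex.I) * u := by
  have hrot : ∀ i j k, Adj i j → Adj i k → ∃ l : ℤ, z j - z i = Complex.I ^ l * (z k - z i) := by
    intro i j k hj hk
    by_cases hjk : j = k
    · exact ⟨0, by simp [hjk]⟩
    · obtain ⟨l, hl⟩ := hgood i j k hj hk hjk
      exact ⟨l, eq_zpow_mul_of_dir (hunit _ _ hj) (hunit _ _ hk) hl⟩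
  obtain ⟨u, hu, hu0⟩ : ∃ u : ℂ, ‖u‖ = 1 ∧
      ∀ k, Adj i₀ k → ∃ l : ℤ, z k - z i₀ = Complex.I ^ l * u := by
    by_cases h : ∃ k, Adj i₀ k
    · obtain ⟨k, hk⟩ := h
      exact ⟨z k - z i₀, hunit _ _ hk, fun j hj => hrot i₀ j k hj hk⟩
    · exact ⟨1, by simp, fun k hk => (h ⟨k, hk⟩).elim⟩
  refine ⟨u, hu, fun j => ?_⟩
  suffices h : (∃ a b : ℤ, z j - z i₀ = (a + b * Complex.I) * u) ∧
      ∀ k, Adj j k → ∃ l : ℤ, z k - z j = Complex.I ^ l * u from h.1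
  induction hconn j with
  | refl => exact ⟨⟨0, 0, by simp⟩, hu0⟩
  | tail _ hbc ih =>
    rename_i b c _
    obtain ⟨⟨p, q, hpq⟩, ih2⟩ := ih
    obtain ⟨l, hl⟩ := ih2 c hbc
    refine ⟨?_, fun d hd => ?_⟩
    · obtain ⟨p', q', h'⟩ := exists_int_I_zpow l
      refine ⟨p + p', q + q', ?_⟩
      rw [h'] at hl
      push_cast
      linear_combination hpq + hl
    · obtain ⟨l', hl'⟩ := hrot c d b hd (hsymm _ _ hbc)
      refine ⟨l' + l + 2, ?_⟩
      have h2 : Complex.I ^ (2 : ℤ) = -1 := by exact_mod_cast Complex.I_sq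
      rw [zpow_add₀ Complex.I_ne_zero, zpow_add₀ Complex.I_ne_zero, h2, hl']
      linear_combination -Complex.I ^ l' * hl

lemma exists_real_of_sum_ne_top {κ : Type*} (s : Finset κ) (f : κ → EReal)
    (hf : ∀ k ∈ s, f k ≠ ⊥) (hs : ∑ k ∈ s, f k ≠ ⊤) :
    (∀ k ∈ s, f k = ((f k).toReal : EReal)) ∧
      ∑ k ∈ s, f k = ((∑ k ∈ s, (f k).toReal : ℝ) : EReal) := by
  classical
  induction s using Finset.induction_on with
  | empty => simp
  | insert a s ha ih =>
    have hbot : ∑ k ∈ s, f k ≠ ⊥ := by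
      refine Finset.sum_induction f (· ≠ ⊥) (fun _ _ h h' => EReal.add_ne_bot_iff.mpr ⟨h, h'⟩)
        (by simp) fun k hk => hf k (Finset.mem_insert_of_mem hk)
    have hfa := hf a (Finset.mem_insert_self _ _)
    rw [Finset.sum_insert ha, EReal.add_ne_top_iff_ne_top₂ hfa hbot] at hs
    obtain ⟨ih1, ih2⟩ := ih (fun k hk => hf k (Finset.mem_insert_of_mem hk)) hs.2
    have ea : f a = ((f a).toReal : EReal) := (EReal.coe_toReal hs.1 hfa).symm
    refine ⟨?_, ?_⟩
    · intro k hk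
      rcases Finset.mem_insert.mp hk with rfl | hk
      · exact ea
      · exact ih1 k hk
    · rw [Finset.sum_insert ha, Finset.sum_insert ha, ih2, EReal.coe_add, ← ea]

/-- A bound on the number of bonds in which every angle far from the multiples of `π / 2` costs at
least `8`. -/
lemma bond_count_le_of_penalty {ι : Type*} [Fintype ι] (z : ι → ℂ) (hz : Function.Injective z)
    (Adj : ι → ι → Prop) [DecidableRel Adj] [DecidableEq ι]
    (hsymm : ∀ i j, Adj i j → Adj j i) (hirr : ∀ i, ¬ Adj i i) (w : ι → ι → ι → ℝ)
    (hw : ∀ i j k, Adj i j → Adj i k → j ≠ k → 0 ≤ w i j k)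
    (hgood : ∀ i j k, Adj i j → Adj i k → j ≠ k →
      ((∃ m : ℤ, |dir (z j - z i) - dir (z k - z i) - (18 + 36 * m)| ≤ 1 / 10 ∧
        |dir (z j - z i) - dir (z k - z i) - (18 + 36 * m)| ≤ 3 / 4 * w i j k) ∨
      ∃ m : ℤ, |dir (z j - z i) - dir (z k - z i) - (9 + 18 * m)| ≤ 1 / 10) ∨ 8 ≤ w i j k) :
    ∑ i, ∑ j, (if Adj i j then (1 : ℝ) else 0) ≤
      4 * Fintype.card ι - 2 * (⌈2 * Real.sqrt (Fintype.card ι)⌉ : ℤ) +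
      ∑ i, ∑ j, ∑ k, (if Adj i j ∧ Adj i k ∧ j ≠ k then 3 / 4 * w i j k else 0) := by
  classical
  set good : ι → ι → ι → Prop := fun i j k =>
    (∃ m : ℤ, |dir (z j - z i) - dir (z k - z i) - (18 + 36 * m)| ≤ 1 / 10 ∧
        |dir (z j - z i) - dir (z k - z i) - (18 + 36 * m)| ≤ 3 / 4 * w i j k) ∨
      ∃ m : ℤ, |dir (z j - z i) - dir (z k - z i) - (9 + 18 * m)| ≤ 1 / 10
  set bad : ι → ι → ι → Prop := fun i j k => (Adj i j ∧ Adj i k ∧ j ≠ k) ∧ ¬ good i j k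
  set alive : ι → ι → Prop := fun i j => Adj i j ∧ (∀ k, ¬ bad i j k) ∧ ∀ k, ¬ bad j i k
  have halive := bond_count_le z hz alive (fun i j h => ⟨hsymm _ _ h.1, h.2.2, h.2.1⟩)
    (fun i h => hirr i h.1) (fun i j k => 3 / 4 * w i j k)
    (fun i j k h1 h2 h3 => mul_nonneg (by norm_num) (hw i j k h1.1 h2.1 h3))
    (fun i j k h1 h2 h3 => by
      by_contra hg
      exact h1.2.1 k ⟨⟨h1.1, h2.1, h3⟩, hg⟩)
  have hite : ∀ (P : Prop) [Decidable P], (0 : ℝ) ≤ if P then 1 else 0 := fun P _ => by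
    split_ifs <;> norm_num
  have hbond : ∀ i j, (if Adj i j then (1 : ℝ) else 0) ≤ (if alive i j then 1 else 0) +
      ∑ k, (if bad i j k then (1 : ℝ) else 0) + ∑ k, (if bad j i k then (1 : ℝ) else 0) := by
    intro i j
    have hs : ∀ a b, 0 ≤ ∑ k, (if bad a b k then (1 : ℝ) else 0) := fun a b =>
      Finset.sum_nonneg fun k _ => hite _
    have hone : ∀ a b k, bad a b k → 1 ≤ ∑ k, (if bad a b k then (1 : ℝ) else 0) := by
      intro a b k h
      have := Finset.single_le_sum (f := fun k => if bad a b k then (1 : ℝ) else 0)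
        (fun k _ => hite _) (Finset.mem_univ k)
      simpa only [if_pos h] using this
    have hs1 := hs i j
    have hs2 := hs j i
    have ha := hite (alive i j)
    by_cases hA : Adj i j
    · rw [if_pos hA]
      by_cases h1 : ∃ k, bad i j k
      · obtain ⟨k, hk⟩ := h1
        linarith [hone i j k hk]
      by_cases h2 : ∃ k, bad j i k
      · obtain ⟨k, hk⟩ := h2
        linarith [hone j i k hk]
      have hal : alive i j := ⟨hA, not_exists.mp h1, not_exists.mp h2⟩
      rw [if_pos hal]
      linarith
    · rw [if_neg hA]
      linarith
  have hsum : ∑ i, ∑ j, (if Adj i j then (1 : ℝ) else 0) ≤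
      ∑ i, ∑ j, (if alive i j then (1 : ℝ) else 0) +
        ∑ i, ∑ j, ∑ k, 2 * (if bad i j k then (1 : ℝ) else 0) := by
    have hswap : ∑ i, ∑ j, ∑ k, (if bad j i k then (1 : ℝ) else 0) =
        ∑ i, ∑ j, ∑ k, (if bad i j k then (1 : ℝ) else 0) := Finset.sum_comm
    have := Finset.sum_le_sum fun i (_ : i ∈ Finset.univ) =>
      Finset.sum_le_sum fun j (_ : j ∈ Finset.univ) => hbond i j
    simp only [Finset.sum_add_distrib, hswap] at this
    simp only [← Finset.mul_sum]
    linarith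
  have hterm : ∑ i, ∑ j, ∑ k, 2 * (if bad i j k then (1 : ℝ) else 0) +
      ∑ i, ∑ j, ∑ k, (if alive i j ∧ alive i k ∧ j ≠ k then 3 / 4 * w i j k else 0) ≤
      ∑ i, ∑ j, ∑ k, (if Adj i j ∧ Adj i k ∧ j ≠ k then 3 / 4 * w i j k else 0) := by
    simp only [← Finset.sum_add_distrib]
    refine Finset.sum_le_sum fun i _ => Finset.sum_le_sum fun j _ => Finset.sum_le_sum fun k _ => ?_
    by_cases ht : Adj i j ∧ Adj i k ∧ j ≠ k
    · rw [if_pos ht]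
      have h0 := hw i j k ht.1 ht.2.1 ht.2.2
      by_cases hb : bad i j k
      · have hna : ¬ (alive i j ∧ alive i k ∧ j ≠ k) := fun h => h.1.2.1 k hb
        have h8 := (hgood i j k ht.1 ht.2.1 ht.2.2).resolve_left hb.2
        rw [if_pos hb, if_neg hna]
        linarith
      · rw [if_neg hb]
        split_ifs <;> linarith
    · have hb : ¬ bad i j k := fun h => ht h.1
      have hna : ¬ (alive i j ∧ alive i k ∧ j ≠ k) := fun h => ht ⟨h.1.1, h.2.1.1, h.2.2⟩
      rw [if_neg ht, if_neg hb, if_neg hna]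
      norm_num
  linarith

/-- The identification of the plane with the complex numbers. -/
def toComplex : Pt ≃ₗᵢ[ℝ] ℂ := Complex.orthonormalBasisOneI.repr.symm

lemma toComplex_apply (p : Pt) : toComplex p = ⟨p 0, p 1⟩ := by
  rw [← Complex.re_add_im (⟨p 0, p 1⟩ : ℂ)]
  simp [toComplex, ← OrthonormalBasis.sum_repr_symm, Fin.sum_univ_two,
    Complex.coe_orthonormalBasisOneI]

lemma cwAngle_nonneg (u v : Pt) : 0 ≤ cwAngle u v := by
  unfold cwAngle
  dsimp only
  split_ifs with h
  · linarith [Complex.neg_pi_lt_arg ((⟨u 0, u 1⟩ : ℂ) * (starRingEnd ℂ) (⟨v 0, v 1⟩ : ℂ)),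
      Real.pi_pos]
  · exact not_lt.mp h

lemma cwAngle_le (u v : Pt) : cwAngle u v ≤ 2 * π := by
  unfold cwAngle
  dsimp only
  split_ifs with h
  · linarith
  · linarith [Complex.arg_le_pi ((⟨u 0, u 1⟩ : ℂ) * (starRingEnd ℂ) (⟨v 0, v 1⟩ : ℂ)),
      Real.pi_pos]

lemma exists_dir_sub_dir_eq {u v : Pt} (hu : u ≠ 0) (hv : v ≠ 0) :
    ∃ m : ℤ, dir (toComplex u) - dir (toComplex v) = cwAngle u v * 18 / π + 36 * m := by
  have hπ := Real.pi_ne_zero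
  have hu' : toComplex u ≠ 0 := by simpa using hu
  have hv' : toComplex v ≠ 0 := by simpa using hv
  have h1 : ((cwAngle u v : ℝ) : Real.Angle) =
      ((Complex.arg (toComplex u) - Complex.arg (toComplex v) : ℝ) : Real.Angle) := by
    have h2 : ((cwAngle u v : ℝ) : Real.Angle) =
        (Complex.arg (toComplex u * (starRingEnd ℂ) (toComplex v)) : Real.Angle) := by
      rw [toComplex_apply, toComplex_apply]
      unfold cwAngle
      dsimp only
      split_ifs <;> simp
    rw [h2, Complex.arg_mul_coe_angle hu' (by simpa using hv), Complex.arg_conj_coe_angle,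
      Real.Angle.coe_sub, sub_eq_add_neg]
  rw [Real.Angle.angle_eq_iff_two_pi_dvd_sub] at h1
  obtain ⟨m, hm⟩ := h1
  refine ⟨-m, ?_⟩
  unfold dir
  field_simp
  push_cast
  linarith

lemma V3Hyp.angle_cases {ε : ℝ} {v3 : ℝ → ℝ} (h : V3Hyp ε v3) (hε : 0 < ε) (hε' : ε < 1 / 100)
    {θ : ℝ} (h0 : 0 ≤ θ) (h1 : θ ≤ 2 * π) :
    (|θ * 18 / π - 18| ≤ 1 / 10 ∧ |θ * 18 / π - 18| ≤ 3 / 4 * v3 θ) ∨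
      |θ * 18 / π - 9| ≤ 1 / 10 ∨ |θ * 18 / π - 27| ≤ 1 / 10 ∨ 8 ≤ v3 θ := by
  have hπ := Real.pi_gt_three
  have hscale : ∀ c : ℝ, |θ * 18 / π - c * 18 / π| = 18 / π * |θ - c| := fun c => by
    rw [show θ * 18 / π - c * 18 / π = 18 / π * (θ - c) by ring, abs_mul,
      abs_of_pos (by positivity : 0 < 18 / π)]
  have hsmall : ∀ c : ℝ, θ ∈ Set.Icc (c - ε) (c + ε) → 18 / π * |θ - c| ≤ 1 / 10 := by
    intro c hc
    have hab : |θ - c| ≤ 1 / 100 := by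
      rw [abs_le]; constructor <;> linarith [hc.1, hc.2]
    have h6 : 18 / π ≤ 6 := by
      rw [div_le_iff₀ (by linarith)]; linarith
    calc 18 / π * |θ - c| ≤ 6 * (1 / 100) :=
          mul_le_mul h6 hab (abs_nonneg _) (by norm_num)
      _ ≤ 1 / 10 := by norm_num
  have e1 : π * 18 / π = 18 := by field_simp
  have e2 : π / 2 * 18 / π = 9 := by field_simp; norm_num
  have e3 : 3 * π / 2 * 18 / π = 27 := by field_simp; norm_num
  by_cases hA : θ ∈ Set.Icc (π - ε) (π + ε)
  · left
    rw [show |θ * 18 / π - 18| = 18 / π * |θ - π| by rw [← hscale, e1]]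
    refine ⟨hsmall π hA, ?_⟩
    have hs := h.slope θ hA
    have hk : 24 / π ≤ 4 * (π / 6 - ε)⁻¹ := by
      rw [show 24 / π = 4 * (π / 6)⁻¹ by field_simp; norm_num]
      have : (π / 6)⁻¹ ≤ (π / 6 - ε)⁻¹ := inv_anti₀ (by linarith) (by linarith)
      linarith
    have hk' := mul_le_mul_of_nonneg_right hk (abs_nonneg (θ - π))
    have e : 18 / π * |θ - π| = 3 / 4 * (24 / π * |θ - π|) := by ring
    rw [e]
    linarith
  by_cases hB : θ ∈ Set.Icc (π / 2 - ε) (π / 2 + ε)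
  · right; left
    simpa only [← hscale, e2] using hsmall _ hB
  by_cases hC : θ ∈ Set.Icc (3 * π / 2 - ε) (3 * π / 2 + ε)
  · right; right; left
    simpa only [← hscale, e3] using hsmall _ hC
  right; right; right
  have hl := h.large θ h0 h1 (by
    rintro ((hx | hx) | hx)
    exacts [hB hx, hA hx, hC hx])
  have hsq : 1 ≤ Real.sqrt 2 := Real.one_le_sqrt.mpr (by norm_num)
  have h4 : 4 ≤ 4 / (1 - ε) ^ 2 := by
    rw [le_div_iff₀ (by nlinarith)]
    nlinarith
  have h2 : 2 ≤ (Real.sqrt 2 + 1 / 2) ^ 2 := by nlinarith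
  nlinarith

lemma energy_eq_real {ε r0 : ℝ} {v2 : ℝ → EReal} {v3 : ℝ → ℝ} (h2 : V2Hyp ε r0 v2) {n : ℕ}
    (x : Fin n → Pt) {c : ℝ} (hE : energy r0 v2 v3 x = (c : EReal)) :
    (∀ i j, j ≠ i → v2 (dist (x i) (x j)) = ((v2 (dist (x i) (x j))).toReal : EReal)) ∧
    1 / 2 * ∑ i : Fin n, ∑ j : Fin n, (if j ≠ i then (v2 (dist (x i) (x j))).toReal else 0) +
      1 / 2 * ∑ i : Fin n, ∑ j : Fin n, ∑ k : Fin n,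
        (if i ≠ j ∧ i ≠ k ∧ j ≠ k ∧ dist (x i) (x j) ≤ r0 ∧ dist (x i) (x k) ≤ r0
          then v3 (cwAngle (x j - x i) (x k - x i)) else 0) = c := by
  unfold energy at hE
  have hbot : ∀ k : Fin n × Fin n, (if k.2 ≠ k.1 then v2 (dist (x k.1) (x k.2)) else 0) ≠ ⊥ := by
    intro k
    split_ifs
    · have := h2.ge_neg_one _ (dist_nonneg (x := x k.1) (y := x k.2))
      intro h
      rw [h, le_bot_iff] at this
      exact absurd this (by decide)
    · simp
  have htop : ∑ k : Fin n × Fin n, (if k.2 ≠ k.1 then v2 (dist (x k.1) (x k.2)) else 0) ≠ ⊤ := by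
    intro h
    rw [Fintype.sum_prod_type] at h
    rw [h, EReal.coe_mul_top_of_pos (by norm_num), EReal.top_add_coe] at hE
    exact EReal.coe_ne_top c hE.symm
  obtain ⟨hr, hs⟩ := exists_real_of_sum_ne_top _ _ (fun k _ => hbot k) htop
  rw [Fintype.sum_prod_type, Fintype.sum_prod_type] at hs
  rw [hs, ← EReal.coe_mul, ← EReal.coe_add, EReal.coe_eq_coe_iff] at hE
  refine ⟨fun i j hij => by simpa [hij] using hr (i, j) (Finset.mem_univ _), ?_⟩
  rw [← hE]
  simp only [apply_ite EReal.toReal, EReal.toReal_zero]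

/-- At minimal energy every bond has length one, every bond angle has zero energy and the number of
bonds is maximal. -/
lemma rigidity_of_energy_eq {ε : ℝ} (hε : 0 < ε) (hε' : ε < 1 / 100) {r0 : ℝ} {v2 : ℝ → EReal}
    {v3 : ℝ → ℝ} (h2 : V2Hyp ε r0 v2) (h3 : V3Hyp ε v3) {n : ℕ} {x : Fin n → Pt}
    (hx : Function.Injective x)
    (hE : energy r0 v2 v3 x = ((-2 * (n : ℝ) + (⌈2 * Real.sqrt n⌉ : ℤ) : ℝ) : EReal)) :
    (∀ i j, i ≠ j → dist (x i) (x j) ≤ r0 → dist (x i) (x j) = 1) ∧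
    (∀ i j k, i ≠ j → i ≠ k → j ≠ k → dist (x i) (x j) ≤ r0 → dist (x i) (x k) ≤ r0 →
      v3 (cwAngle (x j - x i) (x k - x i)) = 0) ∧
    4 * (n : ℝ) - 2 * (⌈2 * Real.sqrt n⌉ : ℤ) ≤
      ∑ i, ∑ j, (if i ≠ j ∧ dist (x i) (x j) ≤ r0 then (1 : ℝ) else 0) := by
  obtain ⟨hreal, hsum⟩ := energy_eq_real h2 x hE
  have hv3 : ∀ i j k, 0 ≤ v3 (cwAngle (x j - x i) (x k - x i)) := fun i j k =>
    h3.nonneg (cwAngle_nonneg _ _) (cwAngle_le _ _)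
  have hbond := bond_count_le_of_penalty (fun i => toComplex (x i)) (toComplex.injective.comp hx)
    (fun i j => i ≠ j ∧ dist (x i) (x j) ≤ r0) (fun i j h => ⟨h.1.symm, dist_comm (x i) _ ▸ h.2⟩)
    (fun i h => h.1 rfl) (fun i j k => v3 (cwAngle (x j - x i) (x k - x i)))
    (fun i j k _ _ _ => hv3 i j k) (by
      intro i j k hj hk _
      obtain ⟨m, hm⟩ := exists_dir_sub_dir_eq (sub_ne_zero.mpr (hx.ne hj.1.symm))
        (sub_ne_zero.mpr (hx.ne hk.1.symm))
      rw [map_sub, map_sub] at hm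
      simp only [hm]
      rcases h3.angle_cases hε hε' (cwAngle_nonneg (x j - x i) (x k - x i)) (cwAngle_le _ _)
        with h | h | h | h
      · refine Or.inl (Or.inl ⟨m, ?_⟩)
        rwa [add_sub_add_right_eq_sub]
      · refine Or.inl (Or.inr ⟨2 * m, ?_⟩)
        push_cast
        rwa [show (18 : ℝ) * (2 * m) = 36 * m by ring, add_sub_add_right_eq_sub]
      · refine Or.inl (Or.inr ⟨2 * m + 1, ?_⟩)
        push_cast
        rwa [show (9 : ℝ) + 18 * (2 * m + 1) = 27 + 36 * m by ring, add_sub_add_right_eq_sub]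
      · exact Or.inr h)
  rw [Fintype.card_fin] at hbond
  set W : Fin n → Fin n → Fin n → ℝ := fun i j k =>
    if i ≠ j ∧ i ≠ k ∧ j ≠ k ∧ dist (x i) (x j) ≤ r0 ∧ dist (x i) (x k) ≤ r0
      then v3 (cwAngle (x j - x i) (x k - x i)) else 0 with hWdef
  have hW0 : ∀ i j k, 0 ≤ W i j k := fun i j k => by
    simp only [hWdef]; split_ifs
    exacts [hv3 i j k, le_rfl]
  have hWsum : ∑ i, ∑ j, ∑ k, (if (i ≠ j ∧ dist (x i) (x j) ≤ r0) ∧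
      (i ≠ k ∧ dist (x i) (x k) ≤ r0) ∧ j ≠ k then
        3 / 4 * v3 (cwAngle (x j - x i) (x k - x i)) else 0) =
      3 / 4 * ∑ i, ∑ j, ∑ k, W i j k := by
    simp only [Finset.mul_sum, hWdef, mul_ite, mul_zero]
    refine Finset.sum_congr rfl fun i _ => Finset.sum_congr rfl fun j _ =>
      Finset.sum_congr rfl fun k _ => if_congr (by tauto) rfl rfl
  rw [hWsum] at hbond
  set e : Fin n → Fin n → ℝ := fun i j =>
    (if j ≠ i then (v2 (dist (x i) (x j))).toReal else 0) +
      (if i ≠ j ∧ dist (x i) (x j) ≤ r0 then (1 : ℝ) else 0) with hedef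
  have hge : ∀ i j, j ≠ i → -1 ≤ (v2 (dist (x i) (x j))).toReal := by
    intro i j hij
    have := h2.ge_neg_one _ (dist_nonneg (x := x i) (y := x j))
    rw [hreal i j hij] at this
    rwa [show (-1 : EReal) = ((-1 : ℝ) : EReal) by simp, EReal.coe_le_coe_iff] at this
  have he0 : ∀ i j, 0 ≤ e i j := by
    intro i j
    simp only [hedef]
    by_cases hij : j = i
    · simp [hij]
    · rw [if_pos hij]
      by_cases hd : dist (x i) (x j) ≤ r0
      · rw [if_pos ⟨Ne.symm hij, hd⟩]
        linarith [hge i j hij]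
      · rw [if_neg fun h => hd h.2, h2.eq_zero _ (not_le.mp hd).le]
        simp
  have hesum : ∑ i, ∑ j, e i j =
      ∑ i, ∑ j, (if j ≠ i then (v2 (dist (x i) (x j))).toReal else 0) +
      ∑ i, ∑ j, (if i ≠ j ∧ dist (x i) (x j) ≤ r0 then (1 : ℝ) else 0) := by
    simp only [hedef, Finset.sum_add_distrib]
  have hE0 : 0 ≤ ∑ i, ∑ j, e i j :=
    Finset.sum_nonneg fun i _ => Finset.sum_nonneg fun j _ => he0 i j
  have hWn : 0 ≤ ∑ i, ∑ j, ∑ k, W i j k :=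
    Finset.sum_nonneg fun i _ => Finset.sum_nonneg fun j _ => Finset.sum_nonneg fun k _ => hW0 i j k
  have hEz : ∑ i, ∑ j, e i j = 0 := by linarith
  have hWz : ∑ i, ∑ j, ∑ k, W i j k = 0 := by linarith
  refine ⟨fun i j hij hd => ?_, fun i j k hij hik hjk hdj hdk => ?_, by linarith⟩
  · have hez : e i j = 0 := by
      rw [Finset.sum_eq_zero_iff_of_nonneg fun i _ => Finset.sum_nonneg fun j _ => he0 i j] at hEz
      have := hEz i (Finset.mem_univ _)
      rw [Finset.sum_eq_zero_iff_of_nonneg fun j _ => he0 i j] at this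
      exact this j (Finset.mem_univ _)
    by_contra hne
    have hlt := h2.gt_neg_one _ dist_nonneg hne
    rw [hreal i j hij.symm, show (-1 : EReal) = ((-1 : ℝ) : EReal) by simp,
      EReal.coe_lt_coe_iff] at hlt
    simp only [hedef] at hez
    rw [if_pos hij.symm, if_pos ⟨hij, hd⟩] at hez
    linarith
  · have hwz : W i j k = 0 := by
      rw [Finset.sum_eq_zero_iff_of_nonneg fun i _ => Finset.sum_nonneg fun j _ =>
        Finset.sum_nonneg fun k _ => hW0 i j k] at hWz
      have := hWz i (Finset.mem_univ _)
      rw [Finset.sum_eq_zero_iff_of_nonneg fun j _ =>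
        Finset.sum_nonneg fun k _ => hW0 i j k] at this
      have := this j (Finset.mem_univ _)
      rw [Finset.sum_eq_zero_iff_of_nonneg fun k _ => hW0 i j k] at this
      exact this k (Finset.mem_univ _)
    simp only [hWdef] at hwz
    rwa [if_pos ⟨hij, hik, hjk, hdj, hdk⟩] at hwz

/-- A rigid motion carrying a rotated and translated copy of the square lattice to `ℤ²`. -/
lemma exists_isometry_to_lattice {ι : Type*} (x : ι → Pt) (i₀ : ι) {u : ℂ} (hu : ‖u‖ = 1)
    (h : ∀ j, ∃ a b : ℤ, toComplex (x j) - toComplex (x i₀) = (a + b * Complex.I) * u) :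
    ∃ R : Pt ≃ᵢ Pt, ∀ j, R (x j) ∈ latticeZ2 := by
  let c : Circle := ⟨u, mem_sphere_zero_iff_norm.mpr hu⟩
  refine ⟨((toComplex.toIsometryEquiv.trans (IsometryEquiv.subRight (toComplex (x i₀)))).trans
    (rotation c⁻¹).toIsometryEquiv).trans toComplex.symm.toIsometryEquiv, fun j => ?_⟩
  obtain ⟨a, b, hab⟩ := h j
  refine ⟨a, b, ?_⟩
  set p : Pt := (((toComplex.toIsometryEquiv.trans
    (IsometryEquiv.subRight (toComplex (x i₀)))).trans
    (rotation c⁻¹).toIsometryEquiv).trans toComplex.symm.toIsometryEquiv) (x j) with hp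
  have hc : ((c⁻¹ : Circle) : ℂ) * u = 1 := by
    have : (c : ℂ) ≠ 0 := c.coe_ne_zero
    rw [Circle.coe_inv]
    exact inv_mul_cancel₀ this
  have h1 : toComplex p = a + b * Complex.I := by
    have : toComplex p = ((c⁻¹ : Circle) : ℂ) * (toComplex (x j) - toComplex (x i₀)) := by
      rw [hp, ← rotation_apply]
      exact toComplex.apply_symm_apply _
    rw [this, hab]
    linear_combination (a + b * Complex.I) * hc
  rw [toComplex_apply] at h1
  exact ⟨by simpa using congrArg Complex.re h1, by simpa using congrArg Complex.im h1⟩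

/-- **Crystallization (equality case).** If a configuration attains the minimal energy
`−2n + ⌈2√n⌉`, then after a rigid motion it is contained in `ℤ²`. -/
theorem crystallization_equality_case :
    ∃ ε₀ : ℝ, 0 < ε₀ ∧ ε₀ < π / 6 ∧
      ∀ ε : ℝ, 0 < ε → ε < ε₀ →
      ∀ r0 : ℝ, 1 < r0 → r0 < Real.sqrt 2 →
      ∀ (v2 : ℝ → EReal) (v3 : ℝ → ℝ), V2Hyp ε r0 v2 → V3Hyp ε v3 →
      ∀ n : ℕ, 1 ≤ n → ∀ x : Fin n → Pt, Function.Injective x →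
      energy r0 v2 v3 x = ((-2 * (n : ℝ) + (⌈2 * Real.sqrt n⌉ : ℤ) : ℝ) : EReal) →
      ∃ R : Pt ≃ᵢ Pt, ∀ i : Fin n, R (x i) ∈ latticeZ2 := by
  refine ⟨1 / 100, by norm_num, by linarith [Real.pi_gt_three], ?_⟩
  intro ε hε hε' r0 _ _ v2 v3 h2 h3 n hn x hx hE
  obtain ⟨hunit, hzero, hcount⟩ := rigidity_of_energy_eq hε hε' h2 h3 hx hE
  have hπ := Real.pi_ne_zero
  set Adj : Fin n → Fin n → Prop := fun i j => i ≠ j ∧ dist (x i) (x j) ≤ r0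
  have hsymm : ∀ i j, Adj i j → Adj j i := fun i j h => ⟨h.1.symm, dist_comm (x i) _ ▸ h.2⟩
  have hgood : ∀ i j k, Adj i j → Adj i k → j ≠ k →
      (∃ m : ℤ, dir (toComplex (x j) - toComplex (x i)) -
        dir (toComplex (x k) - toComplex (x i)) = 18 + 36 * m) ∨
      ∃ m : ℤ, dir (toComplex (x j) - toComplex (x i)) -
        dir (toComplex (x k) - toComplex (x i)) = 9 + 18 * m := by
    intro i j k hj hk hjk
    obtain ⟨m, hm⟩ := exists_dir_sub_dir_eq (sub_ne_zero.mpr (hx.ne hj.1.symm))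
      (sub_ne_zero.mpr (hx.ne hk.1.symm))
    rw [map_sub, map_sub] at hm
    have hv := hzero i j k hj.1 hk.1 hjk hj.2 hk.2
    have hθ : cwAngle (x j - x i) (x k - x i) ∈ ({π / 2, π, 3 * π / 2} : Set ℝ) := by
      by_contra hne
      exact (h3.pos _ (cwAngle_nonneg _ _) (cwAngle_le _ _) hne).ne' hv
    rcases hθ with hθ | hθ | hθ <;> rw [hm, hθ]
    · right
      refine ⟨2 * m, ?_⟩
      push_cast
      field_simp
      ring
    · left
      refine ⟨m, ?_⟩
      field_simp
    · right
      refine ⟨2 * m + 1, ?_⟩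
      push_cast
      field_simp
      ring
  obtain ⟨u, hu, hcoord⟩ := exists_lattice_coordinates (fun i => toComplex (x i)) Adj hsymm
    (fun i j h => by
      rw [← dist_eq_norm, toComplex.dist_map, dist_comm]
      exact hunit i j h.1 h.2)
    (fun i j k hj hk hjk => by
      rcases hgood i j k hj hk hjk with ⟨m, hm⟩ | ⟨m, hm⟩ <;> rw [hm]
      · exact ⟨2 + 4 * m, by push_cast; ring⟩
      · exact ⟨1 + 2 * m, by push_cast; ring⟩)
    ⟨0, hn⟩ (connected_of_bond_count (fun i => toComplex (x i)) (toComplex.injective.comp hx) Adj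
      hsymm (fun i h => h.1 rfl) hgood (by rwa [Fintype.card_fin]) ⟨0, hn⟩)
  exact exists_isometry_to_lattice x ⟨0, hn⟩ hu hcoord

end
end
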